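/- Let A be a free abelian group of finite rank and T a finitely generated abelian group. Then there exist a metabelian group H with a finite presentation whose Dehn function satisfies δ_H(n) ≈ 2ⁿ, and an injective group homomorphism from the restricted wreath product A ≀ T into H. In particular, every free metabelian group of finite rank is a subgroup of a finitely presented metabelian group whose Dehn function is equivalent to 2ⁿ. -/

import Mathlib

open Function

/-- The length of the reduced word representing an element of a free group. -/
noncomputable def freeNorm {X : Type*} (w : FreeGroup X) : ℕ :=
  letI := Classical.decEq X
  w.toWord.length

/-- `w` equals a product of exactly `N` conjugates of elements of `R ∪ R⁻¹`. -/
def AreaIs {G : Type*} [Group G] (R : Set G) (w : G) (N : ℕ) : Prop :=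
  ∃ r f : Fin N → G, (∀ i, r i ∈ R ∨ (r i)⁻¹ ∈ R) ∧
    w = (List.ofFn fun i => (f i)⁻¹ * r i * f i).prod

/-- The area of `w` with respect to the relators `R` is at most `N`. -/
def AreaLe {G : Type*} [Group G] (R : Set G) (w : G) (N : ℕ) : Prop :=
  ∃ N' ≤ N, AreaIs R w N'

/-- `f ≼ g` : there is `C > 0` with `f n ≤ C * g (C * n) + C * n + C` for all `n`. -/
def Dominates (f g : ℕ → ℕ) : Prop :=
  ∃ C : ℕ, 0 < C ∧ ∀ n, f n ≤ C * g (C * n) + C * n + C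

/-- `f ≈ g` : mutual domination. -/
def DehnEquiv (f g : ℕ → ℕ) : Prop := Dominates f g ∧ Dominates g f

/-- `δ` is the Dehn function of the presentation with relator set `R`. -/
def IsDehnFunctionOf {X : Type*} (R : Set (FreeGroup X)) (δ : ℕ → ℕ) : Prop :=
  ∀ n, IsLeast {N | ∀ w ∈ Subgroup.normalClosure R, freeNorm w ≤ n → AreaLe R w N} (δ n)

/-- A group is metabelian if its derived subgroup is abelian. -/
def IsMetabelian (G : Type*) [Group G] : Prop :=
  ∀ a b : G, a ∈ commutator G → b ∈ commutator G → a * b = b * a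

instance derivedSeriesNormalInst {G : Type*} [Group G] (n : ℕ) : (derivedSeries G n).Normal :=
  derivedSeries_normal G n

/-- The free metabelian group on `X`: the free group modulo its second derived subgroup. -/
abbrev FreeMetabelian (X : Type*) := FreeGroup X ⧸ derivedSeries (FreeGroup X) 2

/-- The word length of `w` in the free metabelian group is at most `n`. -/
def mNormLe {X : Type*} (w : FreeMetabelian X) (n : ℕ) : Prop :=
  ∃ v : FreeGroup X, QuotientGroup.mk' (derivedSeries (FreeGroup X) 2) v = w ∧ freeNorm v ≤ n

/-- `δ` is the relative Dehn function (in the variety of metabelian groups) of the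
relative presentation with relator set `R`. -/
def IsRelDehnFunctionOf {X : Type*} (R : Set (FreeMetabelian X)) (δ : ℕ → ℕ) : Prop :=
  ∀ n, IsLeast {N | ∀ w ∈ Subgroup.normalClosure R, mNormLe w n → AreaLe R w N} (δ n)

/-- The paper's commutator convention: `[x, y] = x⁻¹ * y⁻¹ * x * y`. -/
def pcomm {G : Type*} [Group G] (x y : G) : G := x⁻¹ * y⁻¹ * x * y

/-- A group has torsion-free rank `k` if it has a finite-index subgroup isomorphic to `ℤ^k`. -/
def HasTFRank (Q : Type*) [Group Q] (k : ℕ) : Prop :=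
  ∃ H : Subgroup Q, H.index ≠ 0 ∧ Nonempty (H ≃* Multiplicative (Fin k → ℤ))

/-- `G ⧸ A` is abelian and has torsion-free rank `j`. -/
def QuotientRankProp {G : Type*} [Group G] (A : Subgroup G) [A.Normal] (j : ℕ) : Prop :=
  (∀ x y : G ⧸ A, x * y = y * x) ∧ HasTFRank (G ⧸ A) j

/-- The set of torsion-free ranks of quotients `G ⧸ A` by abelian normal subgroups `A`
with `G ⧸ A` abelian. -/
def abelianRankSet (G : Type*) [Group G] : Set ℕ :=
  {j | ∃ A : Subgroup G, ∃ h : A.Normal, (∀ x y : G, x ∈ A → y ∈ A → x * y = y * x) ∧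
    @QuotientRankProp G _ A h j}
/-- The shift automorphism of `⊕_{s ∈ T} A` induced by `t ∈ T` : `(t·φ)(s) = φ(t⁻¹s)`. -/
noncomputable def wreathShift {T : Type*} [CommGroup T] {A : Type*} [AddCommGroup A]
    (t : T) : (T →₀ A) ≃+ (T →₀ A) :=
  Finsupp.domCongr (Equiv.mulLeft t)

/-- The permutation action of `T` on `⊕_{s ∈ T} A` as a homomorphism
`T →* MulAut (Multiplicative (T →₀ A))`. -/
noncomputable def wreathAction (A T : Type*) [AddCommGroup A] [CommGroup T] :
    T →* MulAut (Multiplicative (T →₀ A)) :=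
  MonoidHom.mk' (fun t => AddEquiv.toMultiplicative (wreathShift t)) (by
    intro s t
    refine MulEquiv.ext fun x => ?_
    show Multiplicative.ofAdd (wreathShift (s * t) (Multiplicative.toAdd x))
      = Multiplicative.ofAdd (wreathShift s (wreathShift t (Multiplicative.toAdd x)))
    congr 1
    ext y
    simp only [wreathShift, Finsupp.domCongr_apply, Finsupp.equivMapDomain_apply,
      Equiv.mulLeft_symm, Equiv.coe_mulLeft]
    rw [mul_inv_rev, mul_assoc])

/-- The restricted wreath product `A ≀ T = (⊕_{t ∈ T} A) ⋊ T`. -/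
noncomputable abbrev WreathProduct (A T : Type*) [AddCommGroup A] [CommGroup T] :=
  SemidirectProduct (Multiplicative (T →₀ A)) T (wreathAction A T)

/-!
The ambient group is a group of Baumslag on base letters `aᵢ` and commuting acting letters `sⱼ`,
`tⱼ`: the order of `sⱼ` divides `mⱼ` (no condition if `mⱼ = 0`), the element `tⱼ` acts on the base
as `sⱼ + sⱼ⁻¹ - 3`, and only the finitely many conjugates of base letters by monomials
`∏ sⱼ ^ eⱼ` with `|eⱼ| ≤ 2` are required to commute. Conjugating a commutator of base elements by
`tⱼ` and expanding gives nine commutators; solving for the one with the largest exponents shows by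
induction that all conjugates of base letters commute, at a cost exponential in the exponents.

Upper bound. Let `K` be the total ring of fractions of `ℤ[∏ j, ℤ/mⱼ]`, in which every
`s + s⁻¹ - 3` is a unit. A word is collected into signed conjugates of base letters followed by a
monomial in the acting letters; conjugating by `t`-letters and expanding removes all `t`-exponents
from the former, at the price of exponentially many factors. The relators die in the metabelian
group `K ^ I ⋊ (Kˣ × (∏ j, ℤ/mⱼ) × ℤ ^ J)`, and if the word dies there too, then comparing
coefficients in the group ring, the factors cancel in pairs. Hence the group embeds into this
model, and the area is at most exponential.

Lower bound. If `m₀ = 0`, then `s₀` may act on the Heisenberg group by a hyperbolic matrix of trace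
`4`, for which `s₀ + s₀⁻¹ - 3 = 1`. Every relator becomes central there, so the central coordinate
of a trivial word bounds its area from below; for the commutator of `a` and `s₀ⁿ a s₀⁻ⁿ`, of
length linear in `n`, this coordinate is exponential.

Embeddings. The group `⊕_T A` embeds into `ℤ[T] ^ I`, hence into `K ^ I` for `T` embedded into
`∏ j, ℤ/mⱼ`. A free metabelian group embeds into `ℤ ^ r ≀ ℤ ^ r` by the Magnus representation: for a
word `w` of the derived subgroup, the sum of the Schreier generators along the flow of its path in
the Cayley graph of `ℤ ^ r` is the class of `w` in the abelianized derived subgroup, so that `w`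
lies in the second derived subgroup as soon as the flow is zero.
-/

section Area

open scoped commutatorElement

variable {G : Type*} [Group G] {R : Set G}

theorem AreaLe.one : AreaLe R (1 : G) 0 :=
  ⟨0, le_rfl, Fin.elim0, Fin.elim0, fun i => i.elim0, by simp⟩

theorem AreaLe.mono {w : G} {N M : ℕ} (h : AreaLe R w N) (hNM : N ≤ M) : AreaLe R w M := by
  obtain ⟨N', hN', hw⟩ := h
  exact ⟨N', hN'.trans hNM, hw⟩

theorem AreaLe.mul {w v : G} {N M : ℕ} (hw : AreaLe R w N) (hv : AreaLe R v M) :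
    AreaLe R (w * v) (N + M) := by
  obtain ⟨N', hN, r, f, hr, rfl⟩ := hw
  obtain ⟨M', hM, r', f', hr', rfl⟩ := hv
  refine ⟨N' + M', by omega, Fin.append r r', Fin.append f f', ?_, ?_⟩
  · exact Fin.addCases (by simpa using hr) (by simpa using hr')
  · rw [← List.prod_append, ← List.ofFn_fin_append]
    congr 2
    funext i
    refine Fin.addCases (fun i => ?_) (fun i => ?_) i <;> simp

theorem AreaLe.conj_of_mem_or_inv_mem {r : G} (x : G) (h : r ∈ R ∨ r⁻¹ ∈ R) :
    AreaLe R (x * r * x⁻¹) 1 :=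
  ⟨1, le_rfl, fun _ => r, fun _ => x⁻¹, fun _ => h, by simp⟩

theorem AreaLe.of_mem {r : G} (h : r ∈ R) : AreaLe R r 1 := by
  simpa using AreaLe.conj_of_mem_or_inv_mem 1 (Or.inl h)

theorem AreaLe.exists_le_of_induction {P : G → ℕ → Prop} (one : P 1 0)
    (conj_mul : ∀ x r w N, (r ∈ R ∨ r⁻¹ ∈ R) → P w N → P (x⁻¹ * r * x * w) (N + 1))
    {w : G} {N : ℕ} (h : AreaLe R w N) : ∃ N' ≤ N, P w N' := by
  obtain ⟨N', hN, r, f, hr, rfl⟩ := h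
  refine ⟨N', hN, ?_⟩
  clear hN
  induction N' with
  | zero => simpa using one
  | succ n ih =>
    rw [List.ofFn_succ, List.prod_cons]
    exact conj_mul _ _ _ _ (hr 0) (ih _ _ fun i => hr i.succ)

theorem AreaLe.conj {w : G} {N : ℕ} (h : AreaLe R w N) (x : G) :
    AreaLe R (x * w * x⁻¹) N := by
  obtain ⟨N', hN, r, f, hr, rfl⟩ := h
  refine ⟨N', hN, r, fun i => f i * x⁻¹, hr, ?_⟩
  rw [← MulAut.conj_apply, map_list_prod, List.map_ofFn]
  congr 2
  funext i
  simp [mul_assoc]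

theorem AreaLe.inv {w : G} {N : ℕ} (h : AreaLe R w N) : AreaLe R w⁻¹ N := by
  obtain ⟨N', hN, h'⟩ := h.exists_le_of_induction (P := fun w N => AreaLe R w⁻¹ N)
    (by simpa using AreaLe.one) fun x r w N hr h => by
      have hr' : AreaLe R (x⁻¹ * r⁻¹ * x⁻¹⁻¹) 1 :=
        .conj_of_mem_or_inv_mem x⁻¹ (by rwa [inv_inv, or_comm])
      simpa [mul_assoc] using h.mul hr'
  exact h'.mono hN

theorem AreaLe.mem_normalClosure {w : G} {N : ℕ} (h : AreaLe R w N) :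
    w ∈ Subgroup.normalClosure R := by
  obtain ⟨_, -, r, f, hr, rfl⟩ := h
  refine list_prod_mem (List.forall_mem_ofFn_iff.2 fun i => ?_)
  have hri : r i ∈ Subgroup.normalClosure R :=
    (hr i).elim (fun h => Subgroup.subset_normalClosure h)
      fun h => inv_mem_iff.1 (Subgroup.subset_normalClosure h)
  simpa using Subgroup.normalClosure_normal.conj_mem _ hri (f i)⁻¹

/-- The area of `g * h⁻¹` is at most `N`, i.e. the words `g` and `h` are at distance at most `N`
in the bi-invariant pseudometric defined by the area. -/
def AreaDistLe (R : Set G) (g h : G) (N : ℕ) : Prop := AreaLe R (g * h⁻¹) N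

namespace AreaDistLe

variable {g h k g' h' : G} {N M : ℕ}

theorem areaLe (H : AreaDistLe R g 1 N) : AreaLe R g N := by
  simpa [AreaDistLe] using H

theorem refl (g : G) : AreaDistLe R g g 0 := by
  simpa [AreaDistLe] using AreaLe.one

theorem mono (H : AreaDistLe R g h N) (hNM : N ≤ M) : AreaDistLe R g h M :=
  AreaLe.mono H hNM

theorem symm (H : AreaDistLe R g h N) : AreaDistLe R h g N := by
  simpa [AreaDistLe] using AreaLe.inv H

theorem trans (H : AreaDistLe R g h N) (H' : AreaDistLe R h k M) : AreaDistLe R g k (N + M) := by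
  simpa [AreaDistLe] using AreaLe.mul H H'

theorem mul_left (x : G) (H : AreaDistLe R g h N) : AreaDistLe R (x * g) (x * h) N := by
  simpa [AreaDistLe, mul_assoc] using AreaLe.conj H x

theorem mul_right (H : AreaDistLe R g h N) (x : G) : AreaDistLe R (g * x) (h * x) N := by
  simpa [AreaDistLe, mul_assoc] using H

theorem mul (H : AreaDistLe R g h N) (H' : AreaDistLe R g' h' M) :
    AreaDistLe R (g * g') (h * h') (N + M) :=
  (H.mul_right g').trans (H'.mul_left h)

theorem inv (H : AreaDistLe R g h N) : AreaDistLe R g⁻¹ h⁻¹ N := by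
  simpa using ((H.mul_left g⁻¹).mul_right h⁻¹).symm

theorem conj (x : G) (H : AreaDistLe R g h N) :
    AreaDistLe R (x * g * x⁻¹) (x * h * x⁻¹) N :=
  (H.mul_left x).mul_right _

theorem conj_by (H : AreaDistLe R g h N) (x : G) :
    AreaDistLe R (g * x * g⁻¹) (h * x * h⁻¹) (2 * N) :=
  two_mul N ▸ (H.mul_right x).mul H.inv

theorem pow (H : AreaDistLe R g h N) (n : ℕ) : AreaDistLe R (g ^ n) (h ^ n) (n * N) := by
  induction n with
  | zero => simpa using refl (1 : G)
  | succ n ih =>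
    rw [pow_succ, pow_succ, add_mul, one_mul]
    exact ih.mul H

theorem zpow (H : AreaDistLe R g h N) (n : ℤ) :
    AreaDistLe R (g ^ n) (h ^ n) (n.natAbs * N) := by
  obtain ⟨m, rfl | rfl⟩ := n.eq_nat_or_neg
  · simpa using H.pow m
  · simpa using (H.pow m).inv

theorem zpow_units (H : AreaDistLe R g h N) (ε : ℤˣ) :
    AreaDistLe R (g ^ (ε : ℤ)) (h ^ (ε : ℤ)) N := by
  simpa [Int.units_natAbs] using H.zpow (ε : ℤ)

theorem map_eq {K : Type*} [Group K] {φ : G →* K} (hφ : ∀ r ∈ R, φ r = 1)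
    (H : AreaDistLe R g h N) : φ g = φ h := by
  have hker : Subgroup.normalClosure R ≤ φ.ker := Subgroup.normalClosure_le_normal hφ
  simpa [MonoidHom.mem_ker, mul_inv_eq_one] using hker (AreaLe.mem_normalClosure H)

end AreaDistLe

/-- The commutator of `g` and `h` has area at most `N`. -/
def CommCostLe (R : Set G) (g h : G) (N : ℕ) : Prop := AreaDistLe R (g * h) (h * g) N

/-- The multiplicative form of `x - 3 y + z`; with `x`, `z` the translates of `y` by `s`, `s⁻¹`
it is the action of the Laurent polynomial `s - 3 + s⁻¹` on `y`. -/
def laurentProd (x y z : G) : G := x * y⁻¹ ^ 3 * z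

theorem conj_laurentProd (g x y z : G) :
    g * laurentProd x y z * g⁻¹ = laurentProd (g * x * g⁻¹) (g * y * g⁻¹) (g * z * g⁻¹) := by
  simp [laurentProd, pow_succ, mul_assoc]

theorem AreaDistLe.laurentProd {x x' y y' z z' : G} {K L M : ℕ} (hx : AreaDistLe R x x' K)
    (hy : AreaDistLe R y y' L) (hz : AreaDistLe R z z' M) :
    AreaDistLe R (laurentProd x y z) (laurentProd x' y' z') (K + 3 * L + M) :=
  (hx.mul (hy.inv.pow 3)).mul hz

namespace CommCostLe

variable {g g' h h' : G} {N M : ℕ}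

theorem of_mem (H : ⁅g, h⁆ ∈ R) : CommCostLe R g h 1 := by
  simpa [CommCostLe, AreaDistLe, commutatorElement_def, mul_assoc] using AreaLe.of_mem H

theorem mono (H : CommCostLe R g h N) (hNM : N ≤ M) : CommCostLe R g h M :=
  AreaLe.mono H hNM

theorem symm (H : CommCostLe R g h N) : CommCostLe R h g N := AreaDistLe.symm H

theorem one_right (g : G) : CommCostLe R g 1 0 := by
  simpa [CommCostLe] using AreaDistLe.refl g

theorem mul_right (H : CommCostLe R g h N) (H' : CommCostLe R g h' M) :
    CommCostLe R g (h * h') (N + M) := by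
  simpa [CommCostLe, mul_assoc] using
    (AreaDistLe.mul_right H h').trans (by simpa [mul_assoc] using AreaDistLe.mul_left h H')

theorem mul_left (H : CommCostLe R g h N) (H' : CommCostLe R g' h M) :
    CommCostLe R (g * g') h (N + M) := (H.symm.mul_right H'.symm).symm

theorem inv_right (H : CommCostLe R g h N) : CommCostLe R g h⁻¹ N := by
  simpa [CommCostLe, mul_assoc] using
    ((AreaDistLe.mul_left h⁻¹ H).mul_right h⁻¹).symm

theorem inv_left (H : CommCostLe R g h N) : CommCostLe R g⁻¹ h N := H.symm.inv_right.symm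

theorem pow_right (H : CommCostLe R g h N) (n : ℕ) : CommCostLe R g (h ^ n) (n * N) := by
  induction n with
  | zero => simpa using one_right g
  | succ n ih =>
    rw [pow_succ, add_mul, one_mul]
    exact ih.mul_right H

theorem zpow_right (H : CommCostLe R g h N) (n : ℤ) : CommCostLe R g (h ^ n) (n.natAbs * N) := by
  obtain ⟨m, rfl | rfl⟩ := n.eq_nat_or_neg
  · simpa using H.pow_right m
  · simpa using (H.pow_right m).inv_right

theorem zpow_left (H : CommCostLe R g h N) (n : ℤ) : CommCostLe R (g ^ n) h (n.natAbs * N) :=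
  (H.symm.zpow_right n).symm

theorem conj (x : G) (H : CommCostLe R g h N) : CommCostLe R (x * g * x⁻¹) (x * h * x⁻¹) N := by
  simpa [CommCostLe, mul_assoc] using AreaDistLe.conj x H

theorem congr {A B : ℕ} (H : CommCostLe R g h N) (hg : AreaDistLe R g g' A)
    (hh : AreaDistLe R h h' B) : CommCostLe R g' h' (N + 2 * A + 2 * B) :=
  AreaDistLe.mono (((hg.mul hh).symm.trans H).trans (hh.mul hg)) (by omega)

theorem list_prod_left {α : Type*} {f : α → G} {L : List α}
    (H : ∀ x ∈ L, CommCostLe R (f x) h N) : CommCostLe R (L.map f).prod h (L.length * N) := by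
  induction L with
  | nil => simpa using (one_right h).symm
  | cons x L ih =>
    rw [List.forall_mem_cons] at H
    rw [List.map_cons, List.prod_cons, List.length_cons, add_mul, one_mul, add_comm]
    exact H.1.mul_left (ih H.2)

theorem laurentProd_right {y₁ y₀ y₂ : G} (h₁ : CommCostLe R g y₁ N) (h₀ : CommCostLe R g y₀ N)
    (h₂ : CommCostLe R g y₂ N) : CommCostLe R g (laurentProd y₁ y₀ y₂) (5 * N) :=
  ((h₁.mul_right (h₀.inv_right.pow_right 3)).mul_right h₂).mono (by omega)

/-- The inductive step of Baumslag's argument: of the nine commutators of the factors of two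
Laurent products, eight together with the commutator of the products yield the ninth. -/
theorem of_laurentProd {x₁ x₀ x₂ y₁ y₀ y₂ : G} {K M : ℕ}
    (hXY : CommCostLe R (laurentProd x₁ x₀ x₂) (laurentProd y₁ y₀ y₂) M)
    (h₁₁ : CommCostLe R x₁ y₁ K) (h₁₀ : CommCostLe R x₁ y₀ K) (h₁₂ : CommCostLe R x₁ y₂ K)
    (h₀₁ : CommCostLe R x₀ y₁ K) (h₀₀ : CommCostLe R x₀ y₀ K) (h₀₂ : CommCostLe R x₀ y₂ K)
    (h₂₀ : CommCostLe R x₂ y₀ K) (h₂₂ : CommCostLe R x₂ y₂ K) :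
    CommCostLe R x₂ y₁ (24 * K + M) := by
  set X := laurentProd x₁ x₀ x₂ with hX
  set Y := laurentProd y₁ y₀ y₂ with hY
  have hx₁ : CommCostLe R x₁ Y (5 * K) := h₁₁.laurentProd_right h₁₀ h₁₂
  have hx₀ : CommCostLe R x₀ Y (5 * K) := h₀₁.laurentProd_right h₀₀ h₀₂
  have hx₁₀ : CommCostLe R (x₁ * x₀⁻¹ ^ 3) Y (5 * K + 3 * (5 * K)) :=
    hx₁.mul_left (hx₀.inv_left.symm.pow_right 3).symm
  have hx₂ : CommCostLe R x₂ Y (5 * K + 3 * (5 * K) + M) := by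
    have hx₂_eq : x₂ = (x₁ * x₀⁻¹ ^ 3)⁻¹ * X := by rw [hX, laurentProd]; group
    exact hx₂_eq ▸ hx₁₀.inv_left.mul_left hXY
  have hx₂₀ : CommCostLe R x₂ (y₀⁻¹ ^ 3 * y₂) (3 * K + K) :=
    (h₂₀.inv_right.pow_right 3).mul_right h₂₂
  have hy₁_eq : y₁ = Y * (y₀⁻¹ ^ 3 * y₂)⁻¹ := by rw [hY, laurentProd]; group
  rw [hy₁_eq]
  exact (hx₂.mul_right hx₂₀.inv_right).mono (by omega)

end CommCostLe

end Area

section Cancellation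

theorem exists_label_eq_and_sign_eq_neg {α Λ : Type*} [DecidableEq Λ] (label : α → Λ)
    (sign : α → ℤˣ) {x : α} {L : List α}
    (h : ((x :: L).map fun y => if label y = label x then (sign y : ℤ) else 0).sum = 0) :
    ∃ y ∈ L, label y = label x ∧ sign y = -sign x := by
  by_contra! hne
  have hnonneg : 0 ≤ (L.map fun y =>
      (sign x : ℤ) * if label y = label x then (sign y : ℤ) else 0).sum := by
    refine List.sum_nonneg fun z hz => ?_
    obtain ⟨y, hy, rfl⟩ := List.mem_map.1 hz
    split_ifs with hlabel
    · have hsign := hne y hy hlabel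
      rcases Int.units_eq_one_or (sign x) with hx | hx <;>
        rcases Int.units_eq_one_or (sign y) with hy | hy <;> simp [hx, hy] at hsign ⊢
    · simp
  rw [List.sum_map_mul_left] at hnonneg
  have hsq : (sign x : ℤ) * sign x = 1 := by
    rw [← Units.val_mul, Int.units_mul_self, Units.val_one]
  have hsum := congrArg ((sign x : ℤ) * ·) h
  simp only [List.map_cons, List.sum_cons, if_true, mul_add, mul_zero, hsq] at hsum
  omega

/-- A product of pairwise almost commuting factors is nearly trivial as soon as, label by label,
the signs cancel: move a factor of opposite sign next to the first one and induct. -/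
theorem areaDistLe_one_of_sum_sign_eq_zero {G α Λ : Type*} [Group G] [DecidableEq Λ] {R : Set G}
    (f : α → G) (label : α → Λ) (sign : α → ℤˣ) {c : ℕ} (L : List α)
    (hcomm : ∀ x ∈ L, ∀ y ∈ L, CommCostLe R (f x) (f y) c)
    (hcancel : ∀ x ∈ L, ∀ y ∈ L, label y = label x → sign y = -sign x →
      AreaDistLe R (f x * f y) 1 c)
    (hsum : ∀ l, (L.map fun x => if label x = l then (sign x : ℤ) else 0).sum = 0) :
    AreaDistLe R (L.map f).prod 1 (L.length * L.length * c) := by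
  induction hn : L.length using Nat.strong_induction_on generalizing L with
  | _ n ih =>
  obtain - | ⟨x, L⟩ := L
  · exact (AreaDistLe.refl 1).mono (Nat.zero_le _)
  obtain ⟨y, hy, hlabel, hsign⟩ := exists_label_eq_and_sign_eq_neg label sign (hsum (label x))
  obtain ⟨L₁, L₂, rfl⟩ := List.append_of_mem hy
  have hmem : ∀ z ∈ L₁ ++ L₂, z ∈ x :: (L₁ ++ y :: L₂) := by
    intro z hz
    rcases List.mem_append.1 hz with hz | hz <;> simp [hz]
  have hlen : n = (L₁ ++ L₂).length + 2 := by simp [← hn]; omega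
  have hrest : AreaDistLe R ((L₁ ++ L₂).map f).prod 1 _ :=
    ih (L₁ ++ L₂).length (by omega) (L₁ ++ L₂)
      (fun u hu v hv => hcomm u (hmem u hu) v (hmem v hv))
      (fun u hu v hv => hcancel u (hmem u hu) v (hmem v hv)) (fun l => by
        have hl := hsum l
        simp only [List.map_cons, List.map_append, List.sum_cons, List.sum_append, hlabel,
          hsign] at hl ⊢
        split_ifs at hl <;> push_cast at hl <;> linarith) rfl
  have hmove : AreaDistLe R (f x * ((L₁.map f).prod * f y) * (L₂.map f).prod)
      (f x * (f y * (L₁.map f).prod) * (L₂.map f).prod) (L₁.length * c) :=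
    AreaDistLe.mul_right (AreaDistLe.mul_left _ (CommCostLe.list_prod_left fun z hz =>
      hcomm z (hmem z (by simp [hz])) y (by simp))) _
  have hpair : AreaDistLe R (f x * (f y * (L₁.map f).prod) * (L₂.map f).prod)
      ((L₁ ++ L₂).map f).prod c := by
    simpa [mul_assoc] using (hcancel x (by simp) y (by simp) hlabel hsign).mul_right
      ((L₁ ++ L₂).map f).prod
  have htotal := hmove.trans (hpair.trans hrest)
  simp only [List.map_cons, List.map_append, List.prod_cons, List.prod_append] at htotal ⊢
  simp only [← mul_assoc] at htotal ⊢
  refine htotal.mono ?_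
  have hL₁ : L₁.length * c ≤ (L₁ ++ L₂).length * c := Nat.mul_le_mul_right c (by simp)
  rw [hlen]
  nlinarith [Nat.zero_le ((L₁ ++ L₂).length * c)]

end Cancellation

section PowProd

variable {G : Type*} [Group G] {R : Set G} {Y : Type*}

/-- The product of the powers `g y ^ e y` in the order of the list `l`; the group generated by the
`g y` need not be commutative. -/
def listPowProd (g : Y → G) (l : List Y) (e : Y → ℤ) : G := (l.map fun y => g y ^ e y).prod

theorem listPowProd_cons (g : Y → G) (y : Y) (l : List Y) (e : Y → ℤ) :
    listPowProd g (y :: l) e = g y ^ e y * listPowProd g l e := by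
  simp [listPowProd]

theorem commCostLe_listPowProd {g : Y → G} (hg : ∀ x y, CommCostLe R (g x) (g y) 1) (x : Y)
    (b : ℤ) (l : List Y) (e : Y → ℤ) :
    CommCostLe R (g x ^ b) (listPowProd g l e) (b.natAbs * (l.map fun y => (e y).natAbs).sum) := by
  induction l with
  | nil => simpa [listPowProd] using CommCostLe.one_right (R := R) (g x ^ b)
  | cons y l ih =>
    rw [listPowProd_cons, List.map_cons, List.sum_cons]
    exact ((((hg x y).zpow_left b).zpow_right (e y)).mul_right ih).mono (le_of_eq (by ring))

theorem areaDistLe_listPowProd_mul {g : Y → G} (hg : ∀ x y, CommCostLe R (g x) (g y) 1)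
    (l : List Y) (e f : Y → ℤ) :
    AreaDistLe R (listPowProd g l e * listPowProd g l f) (listPowProd g l (e + f))
      ((l.map fun y => (e y).natAbs).sum * (l.map fun y => (f y).natAbs).sum) := by
  induction l with
  | nil => simpa [listPowProd] using AreaDistLe.refl (R := R) (1 : G)
  | cons y l ih =>
    simp only [listPowProd_cons, List.map_cons, List.sum_cons]
    have hswap := AreaDistLe.mul_right (AreaDistLe.mul_left (g y ^ e y)
      (commCostLe_listPowProd hg y (f y) l e).symm) (listPowProd g l f)
    have htail := ih.mul_left (g y ^ (e y + f y))
    simp only [zpow_add, mul_assoc, Pi.add_apply] at hswap htail ⊢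
    refine (hswap.trans htail).mono ?_
    simp only [add_mul, mul_add]
    have hpos := Nat.zero_le ((e y).natAbs * (f y).natAbs)
    have hpos' := Nat.zero_le ((e y).natAbs * (l.map fun y => (f y).natAbs).sum)
    nlinarith

theorem areaDistLe_listPowProd {g : Y → G} (l : List Y) {e f : Y → ℤ}
    (h : ∀ y, AreaDistLe R (g y ^ e y) (g y ^ f y) (e y - f y).natAbs) :
    AreaDistLe R (listPowProd g l e) (listPowProd g l f)
      (l.map fun y => ((e - f) y).natAbs).sum := by
  induction l with
  | nil => exact AreaDistLe.refl 1
  | cons y l ih => simpa [listPowProd_cons] using (h y).mul ih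

variable [Fintype Y]

/-- The product of the powers `g y ^ e y` in an arbitrary but fixed order of the index type. -/
noncomputable def powProd (g : Y → G) (e : Y → ℤ) : G := listPowProd g Finset.univ.toList e

/-- The `ℓ¹`-norm of an integer vector. -/
def l1Norm (e : Y → ℤ) : ℕ := ∑ y, (e y).natAbs

theorem areaDistLe_powProd_mul {g : Y → G} (hg : ∀ x y, CommCostLe R (g x) (g y) 1)
    (e f : Y → ℤ) :
    AreaDistLe R (powProd g e * powProd g f) (powProd g (e + f)) (l1Norm e * l1Norm f) := by
  simpa only [powProd, l1Norm, Finset.sum_map_toList] using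
    areaDistLe_listPowProd_mul hg Finset.univ.toList e f

theorem areaDistLe_powProd {g : Y → G} {e f : Y → ℤ}
    (h : ∀ y, AreaDistLe R (g y ^ e y) (g y ^ f y) (e y - f y).natAbs) :
    AreaDistLe R (powProd g e) (powProd g f) (l1Norm (e - f)) := by
  simpa only [powProd, l1Norm, Finset.sum_map_toList] using
    areaDistLe_listPowProd Finset.univ.toList h

@[simp]
theorem powProd_zero (g : Y → G) : powProd g 0 = 1 := by
  simp [powProd, listPowProd]

@[simp]
theorem powProd_single [DecidableEq Y] (g : Y → G) (y : Y) (c : ℤ) :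
    powProd g (Pi.single y c) = g y ^ c := by
  rw [powProd, listPowProd, List.prod_map_eq_pow_single y _ (by simp +contextual),
    List.count_eq_one_of_mem (Finset.nodup_toList _) (by simp)]
  simp

theorem map_powProd {K : Type*} [Group K] (φ : G →* K) (g : Y → G) (e : Y → ℤ) :
    φ (powProd g e) = powProd (fun y => φ (g y)) e := by
  simp [powProd, listPowProd, map_list_prod, Function.comp_def]

theorem powProd_eq_prod {K : Type*} [CommGroup K] (g : Y → K) (e : Y → ℤ) :
    powProd g e = ∏ y, g y ^ e y := by
  simp [powProd, listPowProd, Finset.prod_map_toList]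

theorem l1Norm_add_le (e f : Y → ℤ) : l1Norm (e + f) ≤ l1Norm e + l1Norm f := by
  rw [l1Norm, l1Norm, l1Norm, ← Finset.sum_add_distrib]
  exact Finset.sum_le_sum fun y _ => Int.natAbs_add_le _ _

@[simp]
theorem l1Norm_neg (e : Y → ℤ) : l1Norm (-e) = l1Norm e := by simp [l1Norm]

theorem l1Norm_sub_le (e f : Y → ℤ) : l1Norm (e - f) ≤ l1Norm e + l1Norm f := by
  simpa [sub_eq_add_neg] using l1Norm_add_le e (-f)

@[simp]
theorem l1Norm_zero : l1Norm (0 : Y → ℤ) = 0 := by simp [l1Norm]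

theorem l1Norm_add_single [DecidableEq Y] (e : Y → ℤ) (y : Y) (c : ℤ) :
    l1Norm (e + Pi.single y c) + (e y).natAbs = l1Norm e + (e y + c).natAbs := by
  have hrest : ∑ x ∈ Finset.univ.erase y, ((e + Pi.single y c : Y → ℤ) x).natAbs =
      ∑ x ∈ Finset.univ.erase y, (e x).natAbs :=
    Finset.sum_congr rfl fun x hx => by simp [Finset.ne_of_mem_erase hx]
  rw [l1Norm, l1Norm, ← Finset.add_sum_erase _ _ (Finset.mem_univ y),
    ← Finset.add_sum_erase _ (fun y => (e y).natAbs) (Finset.mem_univ y), hrest]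
  simp only [Pi.add_apply, Pi.single_eq_same]
  omega

@[simp]
theorem l1Norm_single [DecidableEq Y] (y : Y) (c : ℤ) :
    l1Norm (Pi.single y c : Y → ℤ) = c.natAbs := by
  simpa using l1Norm_add_single (0 : Y → ℤ) y c

theorem natAbs_le_l1Norm (e : Y → ℤ) (y : Y) : (e y).natAbs ≤ l1Norm e :=
  Finset.single_le_sum (f := fun y => (e y).natAbs) (fun _ _ => Nat.zero_le _) (Finset.mem_univ y)

end PowProd

section BaumslagRelations

variable {G : Type*} [Group G] {R : Set G} {I J : Type*}

/-- The exponent vector `e` of a monomial in the letters `sⱼ = inl j` and `tⱼ = inr j` involves no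
`t`-letter. -/
def IsTFree (e : J ⊕ J → ℤ) : Prop := ∀ j, e (Sum.inr j) = 0

theorem IsTFree.add_single [DecidableEq J] {e : J ⊕ J → ℤ} (he : IsTFree e) (j : J) (c : ℤ) :
    IsTFree (e + Pi.single (Sum.inl j) c) :=
  fun j' => by simpa using he j'

variable [Fintype J]

/-- The conjugate `(∏ y, g y ^ e y) * a i * (∏ y, g y ^ e y)⁻¹`, written `aᵢ^e` below. -/
noncomputable def baseConj (a : I → G) (g : J ⊕ J → G) (i : I) (e : J ⊕ J → ℤ) : G :=
  powProd g e * a i * (powProd g e)⁻¹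

@[simp]
theorem baseConj_zero (a : I → G) (g : J ⊕ J → G) (i : I) : baseConj a g i 0 = a i := by
  simp [baseConj]

theorem map_baseConj {K : Type*} [Group K] (φ : G →* K) (a : I → G) (g : J ⊕ J → G) (i : I)
    (e : J ⊕ J → ℤ) :
    φ (baseConj a g i e) = baseConj (fun i => φ (a i)) (fun y => φ (g y)) i e := by
  simp [baseConj, map_powProd]

variable [DecidableEq J]

/-- Baumslag's relations hold at cost one, where `sⱼ = g (inl j)` and `tⱼ = g (inr j)`: the `sⱼ`
and `tⱼ` commute, `sⱼ` has order dividing `m j`, `tⱼ` acts on the `aᵢ` as `sⱼ - 3 + sⱼ⁻¹`, and the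
conjugates of the `aᵢ` by monomials in the `sⱼ` with exponents at most `2` commute. -/
structure BaumslagRelations (R : Set G) (a : I → G) (g : J ⊕ J → G) (m : J → ℕ) : Prop where
  commute_acting : ∀ x y, CommCostLe R (g x) (g y) 1
  s_pow : ∀ j, AreaDistLe R (g (Sum.inl j) ^ m j) 1 1
  t_conj : ∀ i j, AreaDistLe R (baseConj a g i (Pi.single (Sum.inr j) 1))
    (laurentProd (baseConj a g i (Pi.single (Sum.inl j) 1)) (a i)
      (baseConj a g i (Pi.single (Sum.inl j) (-1)))) 1
  commute_base : ∀ i l (e : J ⊕ J → ℤ), (∀ j, (e (Sum.inl j)).natAbs ≤ 2) → IsTFree e →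
    CommCostLe R (a i) (baseConj a g l e) 1

namespace BaumslagRelations

variable {a : I → G} {g : J ⊕ J → G} {m : J → ℕ}

theorem conj_baseConj (H : BaumslagRelations R a g m) (h e : J ⊕ J → ℤ) (i : I) :
    AreaDistLe R (powProd g h * baseConj a g i e * (powProd g h)⁻¹) (baseConj a g i (h + e))
      (2 * (l1Norm h * l1Norm e)) := by
  simpa [baseConj, mul_assoc] using (areaDistLe_powProd_mul H.commute_acting h e).conj_by (a i)

theorem commCostLe_baseConj_add (H : BaumslagRelations R a g m) (h : J ⊕ J → ℤ)
    {e f : J ⊕ J → ℤ} {i l : I} {K : ℕ}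
    (hK : CommCostLe R (baseConj a g i e) (baseConj a g l f) K) :
    CommCostLe R (baseConj a g i (h + e)) (baseConj a g l (h + f))
      (K + 4 * (l1Norm h * l1Norm e) + 4 * (l1Norm h * l1Norm f)) :=
  ((hK.conj (powProd g h)).congr (H.conj_baseConj h e i) (H.conj_baseConj h f l)).mono (by omega)

theorem commCostLe_baseConj_self_add (H : BaumslagRelations R a g m) (h : J ⊕ J → ℤ)
    {f : J ⊕ J → ℤ} {i l : I} {K : ℕ} (hK : CommCostLe R (a i) (baseConj a g l f) K) :
    CommCostLe R (baseConj a g i h) (baseConj a g l (h + f)) (K + 4 * (l1Norm h * l1Norm f)) := by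
  simpa using H.commCostLe_baseConj_add h (e := 0) (by simpa using hK)

theorem baseConj_add_t (H : BaumslagRelations R a g m) (e : J ⊕ J → ℤ) (i : I) (j : J) :
    AreaDistLe R (baseConj a g i (e + Pi.single (Sum.inr j) 1))
      (laurentProd (baseConj a g i (e + Pi.single (Sum.inl j) 1)) (baseConj a g i e)
        (baseConj a g i (e + Pi.single (Sum.inl j) (-1)))) (6 * l1Norm e + 1) := by
  have ht := (H.conj_baseConj e (Pi.single (Sum.inr j) 1) i).symm
  have hs := H.conj_baseConj e (Pi.single (Sum.inl j) 1) i
  have hs_inv := H.conj_baseConj e (Pi.single (Sum.inl j) (-1)) i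
  have hexpand := (H.t_conj i j).conj (powProd g e)
  rw [conj_laurentProd] at hexpand
  refine (ht.trans (hexpand.trans (hs.laurentProd (.refl _) hs_inv))).mono ?_
  simp only [l1Norm_single, Int.natAbs_one, Int.natAbs_neg]
  omega

theorem commCostLe_laurentProd (H : BaumslagRelations R a g m) {K : ℕ} {e : J ⊕ J → ℤ} {i l : I}
    (j : J) (hcomm : CommCostLe R (a i) (baseConj a g l e) K) :
    CommCostLe R
      (laurentProd (baseConj a g i (Pi.single (Sum.inl j) 1)) (a i)
        (baseConj a g i (Pi.single (Sum.inl j) (-1))))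
      (laurentProd (baseConj a g l (e + Pi.single (Sum.inl j) 1)) (baseConj a g l e)
        (baseConj a g l (e + Pi.single (Sum.inl j) (-1)))) (K + 16 * l1Norm e + 4) := by
  have hshift := H.commCostLe_baseConj_self_add (Pi.single (Sum.inr j) 1) hcomm
  rw [add_comm _ e] at hshift
  refine (hshift.congr (H.t_conj i j) (H.baseConj_add_t e l j)).mono ?_
  simp only [l1Norm_single, Int.natAbs_one]
  omega

/-- The step of Baumslag's induction. Conjugating the commutator of `aᵢ` and `aₗ^e` by `tⱼ` gives
the commutator of two Laurent products, whose factors are known to commute except for `aᵢ^(-s)` and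
`aₗ^(e + s)`; the latter pair is a translate of `aᵢ`, `aₗ^(e + 2s)`. -/
theorem commCostLe_baseConj_step (H : BaumslagRelations R a g m) {n P : ℕ} {e : J ⊕ J → ℤ}
    {i l : I} (j : J)
    (hcomm : ∀ c ∈ Set.Icc (-2 : ℤ) 1,
      CommCostLe R (a i) (baseConj a g l (e + Pi.single (Sum.inl j) c)) P)
    (hnorm : ∀ c ∈ Set.Icc (-2 : ℤ) 1, l1Norm (e + Pi.single (Sum.inl j) c) ≤ n) :
    CommCostLe R (a i) (baseConj a g l (e + Pi.single (Sum.inl j) 2))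
      (25 * P + 116 * n + 8) := by
  let S (c : ℤ) : J ⊕ J → ℤ := Pi.single (Sum.inl j) c
  have hS (c d : ℤ) : S c + S d = S (c + d) := (Pi.single_add (f := fun _ => ℤ) _ c d).symm
  have hS0 : S 0 = 0 := Pi.single_zero _
  have hpair (p q : ℤ) (hp : p.natAbs ≤ 1) (hq : q - p ∈ Set.Icc (-2 : ℤ) 1) :
      CommCostLe R (baseConj a g i (S p)) (baseConj a g l (e + S q)) (P + 4 * n) := by
    have hshift := H.commCostLe_baseConj_self_add (S p) (f := e + S (q - p)) (hcomm _ hq)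
    rw [add_left_comm, hS, add_sub_cancel] at hshift
    have hle : l1Norm (S p) * l1Norm (e + S (q - p)) ≤ 1 * n :=
      Nat.mul_le_mul ((l1Norm_single _ p).trans_le hp) (hnorm _ hq)
    exact hshift.mono (by omega)
  have hK := hcomm 0 (by simp)
  have hn := hnorm 0 (by simp)
  rw [show Pi.single (Sum.inl j) (0 : ℤ) = (0 : J ⊕ J → ℤ) from hS0, add_zero] at hK hn
  have hlast : CommCostLe R (baseConj a g i (S (-1))) (baseConj a g l (e + S 1)) _ :=
    CommCostLe.of_laurentProd
      ((H.commCostLe_laurentProd j hK).mono (M := P + 16 * n + 4) (by omega))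
      (hpair 1 1 (by simp) (by simp))
      (by simpa [hS0] using hpair 1 0 (by simp) (by simp))
      (hpair 1 (-1) (by simp) (by simp))
      (by simpa [hS0] using hpair 0 1 (by simp) (by simp))
      (by simpa [hS0] using hpair 0 0 (by simp) (by simp))
      (by simpa [hS0] using hpair 0 (-1) (by simp) (by simp))
      (by simpa [hS0] using hpair (-1) 0 (by simp) (by simp))
      (hpair (-1) (-1) (by simp) (by simp))
  have hshift := H.commCostLe_baseConj_add (S 1) hlast
  rw [hS, add_left_comm, hS, add_neg_cancel, hS0, baseConj_zero] at hshift
  refine hshift.mono ?_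
  have hnorm₁ := hnorm 1 (by simp)
  change _ + 4 * (l1Norm (S 1) * l1Norm (S (-1))) + 4 * (l1Norm (S 1) * l1Norm (e + S 1)) ≤ _
  change l1Norm (e + S 1) ≤ n at hnorm₁
  simp only [S, l1Norm_single, Int.natAbs_one, Int.natAbs_neg] at hnorm₁ ⊢
  omega

theorem commCostLe_baseConj_of_three_le (H : BaumslagRelations R a g m) {n P : ℕ}
    (IH : ∀ i l {e : J ⊕ J → ℤ}, IsTFree e → l1Norm e ≤ n → CommCostLe R (a i) (baseConj a g l e) P)
    {e : J ⊕ J → ℤ} (he : IsTFree e) (hn : l1Norm e ≤ n + 1) {j : J} (hj : 3 ≤ e (Sum.inl j))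
    (i l : I) : CommCostLe R (a i) (baseConj a g l e) (25 * P + 116 * n + 8) := by
  have hsub (c : ℤ) : e + Pi.single (Sum.inl j) (-2) + Pi.single (Sum.inl j) c =
      e + Pi.single (Sum.inl j) (c - 2) := by
    rw [add_assoc, ← Pi.single_add, neg_add_eq_sub]
  have hnorm (c : ℤ) (hc : c ∈ Set.Icc (-2 : ℤ) 1) :
      l1Norm (e + Pi.single (Sum.inl j) (c - 2)) ≤ n := by
    have hadd := l1Norm_add_single e (Sum.inl j) (c - 2)
    obtain ⟨hc₁, hc₂⟩ := hc
    omega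
  have hstep := H.commCostLe_baseConj_step (i := i) (l := l) (n := n) (P := P) j
    (fun c hc => by rw [hsub]; exact IH i l (he.add_single j _) (hnorm c hc))
    (fun c hc => by rw [hsub]; exact hnorm c hc)
  simpa [hsub] using hstep

theorem commCostLe_baseConj_of_isTFree (H : BaumslagRelations R a g m) (n : ℕ) :
    ∀ i l {e : J ⊕ J → ℤ}, IsTFree e → l1Norm e ≤ n →
      CommCostLe R (a i) (baseConj a g l e) (2 ^ (5 * n + 7)) := by
  induction n with
  | zero =>
    intro i l e he hn
    exact (H.commute_base i l e (fun j => (natAbs_le_l1Norm e _).trans (hn.trans (by simp)))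
      he).mono Nat.one_le_two_pow
  | succ n IH =>
    intro i l e he hn
    have hcost : 25 * 2 ^ (5 * n + 7) + 116 * n + 8 + 4 * ((n + 1) * (n + 1)) ≤
        2 ^ (5 * (n + 1) + 7) := by
      have hlt : n + 1 ≤ 2 ^ n := Nat.lt_two_pow_self
      have hsq : 2 ^ n * 2 ^ n ≤ 2 ^ (5 * n) := by
        rw [← pow_add]
        exact Nat.pow_le_pow_right two_pos (by omega)
      rw [show 2 ^ (5 * (n + 1) + 7) = 4096 * 2 ^ (5 * n) by ring, pow_add]
      nlinarith
    by_cases hbox : ∀ j, (e (Sum.inl j)).natAbs ≤ 2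
    · exact (H.commute_base i l e hbox he).mono Nat.one_le_two_pow
    obtain ⟨j, hj⟩ := not_forall.mp hbox
    rcases le_or_gt 0 (e (Sum.inl j)) with hpos | hneg
    · exact (H.commCostLe_baseConj_of_three_le IH he hn (j := j) (by omega) i l).mono
        (by omega)
    · have hcomm := H.commCostLe_baseConj_of_three_le IH (e := -e) (fun j' => by simp [he j'])
        (by simpa using hn) (j := j) (by rw [Pi.neg_apply]; omega) l i
      have hshift := H.commCostLe_baseConj_self_add e hcomm
      rw [add_neg_cancel, baseConj_zero, l1Norm_neg] at hshift
      refine hshift.symm.mono (le_trans ?_ hcost)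
      have := Nat.mul_le_mul hn hn
      omega

theorem commCostLe_baseConj (H : BaumslagRelations R a g m) {B : ℕ} {e f : J ⊕ J → ℤ}
    (he : IsTFree e) (hf : IsTFree f) (heB : l1Norm e ≤ B) (hfB : l1Norm f ≤ B) (i l : I) :
    CommCostLe R (baseConj a g i e) (baseConj a g l f) (2 ^ (10 * B + 8)) := by
  have hsub : l1Norm (f - e) ≤ 2 * B := (l1Norm_sub_le f e).trans (by omega)
  have hshift := H.commCostLe_baseConj_self_add e
    (H.commCostLe_baseConj_of_isTFree (2 * B) i l (fun j => by simp [he j, hf j]) hsub)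
  rw [add_sub_cancel] at hshift
  refine hshift.mono ?_
  have hmul := Nat.mul_le_mul heB hsub
  have hlt : B ≤ 2 ^ B := Nat.lt_two_pow_self.le
  have hsq : 2 ^ B * 2 ^ B ≤ 2 ^ (10 * B) := by
    rw [← pow_add]
    exact Nat.pow_le_pow_right two_pos (by omega)
  rw [show 5 * (2 * B) = 10 * B by ring, pow_add _ _ 7, pow_add _ _ 8]
  nlinarith

theorem areaDistLe_powProd_of_modEq (H : BaumslagRelations R a g m) {e f : J ⊕ J → ℤ}
    (he : IsTFree e) (hf : IsTFree f)
    (hmod : ∀ j, (e (Sum.inl j) : ZMod (m j)) = f (Sum.inl j)) :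
    AreaDistLe R (powProd g e) (powProd g f) (l1Norm (e - f)) := by
  refine areaDistLe_powProd fun y => ?_
  rcases y with j | j
  · obtain ⟨c, hc⟩ := (ZMod.intCast_eq_intCast_iff_dvd_sub _ _ _).mp (hmod j).symm
    have hpow := (((H.s_pow j).zpow c).mul_left (g (Sum.inl j) ^ f (Sum.inl j)))
    rw [← zpow_natCast, ← zpow_mul, ← zpow_add, ← hc, add_sub_cancel, one_zpow, mul_one,
      mul_one] at hpow
    rcases Nat.eq_zero_or_pos (m j) with h0 | h0
    · have : e (Sum.inl j) = f (Sum.inl j) := by simpa [h0, sub_eq_zero] using hc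
      rw [this]
      exact (AreaDistLe.refl _).mono (Nat.zero_le _)
    refine hpow.mono ?_
    rw [hc, Int.natAbs_mul, Int.natAbs_natCast]
    exact Nat.le_mul_of_pos_left _ h0
  · rw [he j, hf j]
    exact (AreaDistLe.refl _).mono (Nat.zero_le _)

end BaumslagRelations

end BaumslagRelations

section SignedTerm

variable {G : Type*} [Group G] {R : Set G} {I J : Type*}

/-- A formal factor `(aᵢ^e)^ε` with `ε = ±1`; words in the `aᵢ`, `sⱼ`, `tⱼ` are collected into lists
of such factors. -/
structure SignedTerm (I J : Type*) where
  /-- The sign `ε`. -/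
  sign : ℤˣ
  /-- The index `i` of the base generator. -/
  gen : I
  /-- The exponent vector `e` of the conjugating monomial. -/
  exp : J ⊕ J → ℤ

namespace SignedTerm

/-- The factor with the opposite sign. -/
def neg (x : SignedTerm I J) : SignedTerm I J := ⟨-x.sign, x.gen, x.exp⟩

/-- The factor whose conjugating monomial is multiplied by the monomial with exponents `h`. -/
def shift (h : J ⊕ J → ℤ) (x : SignedTerm I J) : SignedTerm I J := ⟨x.sign, x.gen, h + x.exp⟩

/-- The generator of a factor together with the `s`-exponents of its conjugating monomial modulo
`m`: among factors free of `t`-letters this determines the value up to sign. -/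
def label (m : J → ℕ) (x : SignedTerm I J) : I × ∀ j, ZMod (m j) :=
  (x.gen, fun j => (x.exp (Sum.inl j) : ZMod (m j)))

variable [Fintype J] {a : I → G} {g : J ⊕ J → G}

/-- The value of a factor in a group with chosen elements `aᵢ` and `g = (s, t)`. -/
noncomputable def eval (a : I → G) (g : J ⊕ J → G) (x : SignedTerm I J) : G :=
  baseConj a g x.gen x.exp ^ (x.sign : ℤ)

theorem eval_neg (x : SignedTerm I J) : x.neg.eval a g = (x.eval a g)⁻¹ := by
  simp [eval, neg]

theorem map_eval {K : Type*} [Group K] (φ : G →* K) (x : SignedTerm I J) :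
    φ (x.eval a g) = x.eval (fun i => φ (a i)) (fun y => φ (g y)) := by
  simp only [eval, map_zpow, map_baseConj]

/-- The product of the values of a list of factors. -/
noncomputable def listEval (a : I → G) (g : J ⊕ J → G) (L : List (SignedTerm I J)) : G :=
  (L.map (eval a g)).prod

@[simp]
theorem listEval_nil : listEval a g [] = 1 := rfl

@[simp]
theorem listEval_cons (x : SignedTerm I J) (L : List (SignedTerm I J)) :
    listEval a g (x :: L) = x.eval a g * listEval a g L := by simp [listEval]

theorem listEval_append (L L' : List (SignedTerm I J)) :
    listEval a g (L ++ L') = listEval a g L * listEval a g L' := by simp [listEval]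

theorem listEval_reverse_map_neg (L : List (SignedTerm I J)) :
    listEval a g (L.map neg).reverse = (listEval a g L)⁻¹ := by
  simp [listEval, List.prod_inv_reverse, List.map_reverse, Function.comp_def, eval_neg]

theorem map_listEval {K : Type*} [Group K] (φ : G →* K) (L : List (SignedTerm I J)) :
    φ (listEval a g L) = listEval (fun i => φ (a i)) (fun y => φ (g y)) L := by
  simp [listEval, map_list_prod, map_eval, Function.comp_def]

end SignedTerm

open SignedTerm

variable [Fintype J] {a : I → G} {g : J ⊕ J → G} {m : J → ℕ}

/-- Up to area `N`, the element `w` is a product of at most `ℓ` factors `(aᵢ^e)^±1` free of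
`t`-letters and with `e` of norm at most `B`. -/
def HasTFreeExpansion (R : Set G) (a : I → G) (g : J ⊕ J → G) (B : ℕ) (w : G) (ℓ N : ℕ) : Prop :=
  ∃ L : List (SignedTerm I J), (∀ x ∈ L, IsTFree x.exp ∧ l1Norm x.exp ≤ B) ∧ L.length ≤ ℓ ∧
    AreaDistLe R w (listEval a g L) N

namespace HasTFreeExpansion

variable {B ℓ ℓ' N N' : ℕ} {w w' : G}

theorem one : HasTFreeExpansion R a g B 1 0 0 :=
  ⟨[], by simp, by simp, .refl 1⟩

theorem of_isTFree (i : I) {e : J ⊕ J → ℤ} (he : IsTFree e) (hB : l1Norm e ≤ B) :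
    HasTFreeExpansion R a g B (baseConj a g i e) 1 0 :=
  ⟨[⟨1, i, e⟩], by simp [he, hB], by simp, by simpa [SignedTerm.eval] using AreaDistLe.refl _⟩

theorem mono (h : HasTFreeExpansion R a g B w ℓ N) (hℓ : ℓ ≤ ℓ') (hN : N ≤ N') :
    HasTFreeExpansion R a g B w ℓ' N' := by
  obtain ⟨L, hL, hlen, hdist⟩ := h
  exact ⟨L, hL, hlen.trans hℓ, hdist.mono hN⟩

theorem congr (hdist : AreaDistLe R w w' N') (h : HasTFreeExpansion R a g B w' ℓ N) :
    HasTFreeExpansion R a g B w ℓ (N' + N) := by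
  obtain ⟨L, hL, hlen, hdist'⟩ := h
  exact ⟨L, hL, hlen, hdist.trans hdist'⟩

theorem mul (h : HasTFreeExpansion R a g B w ℓ N) (h' : HasTFreeExpansion R a g B w' ℓ' N') :
    HasTFreeExpansion R a g B (w * w') (ℓ + ℓ') (N + N') := by
  obtain ⟨L, hL, hlen, hdist⟩ := h
  obtain ⟨L', hL', hlen', hdist'⟩ := h'
  refine ⟨L ++ L', fun x hx => (List.mem_append.mp hx).elim (hL x) (hL' x), ?_, ?_⟩
  · rw [List.length_append]
    exact Nat.add_le_add hlen hlen'
  · rw [listEval_append]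
    exact hdist.mul hdist'

theorem inv (h : HasTFreeExpansion R a g B w ℓ N) : HasTFreeExpansion R a g B w⁻¹ ℓ N := by
  obtain ⟨L, hL, hlen, hdist⟩ := h
  refine ⟨(L.map neg).reverse, fun x hx => ?_, by simpa using hlen, ?_⟩
  · obtain ⟨y, hy, rfl⟩ := List.mem_map.mp (List.mem_reverse.mp hx)
    exact hL y hy
  · rw [listEval_reverse_map_neg]
    exact hdist.inv

theorem zpow_units (h : HasTFreeExpansion R a g B w ℓ N) (ε : ℤˣ) :
    HasTFreeExpansion R a g B (w ^ (ε : ℤ)) ℓ N := by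
  rcases Int.units_eq_one_or ε with rfl | rfl
  · simpa using h
  · simpa using h.inv

theorem laurentProd {x y z : G} (hx : HasTFreeExpansion R a g B x ℓ N)
    (hy : HasTFreeExpansion R a g B y ℓ N) (hz : HasTFreeExpansion R a g B z ℓ N) :
    HasTFreeExpansion R a g B (laurentProd x y z) (5 * ℓ) (5 * N) := by
  have hcube := (hy.inv.mul hy.inv).mul hy.inv
  simp only [_root_.laurentProd, pow_succ, pow_zero, one_mul]
  exact ((hx.mul hcube).mul hz).mono (by omega) (by omega)

end HasTFreeExpansion

variable [DecidableEq J]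

theorem exists_eq_add_single_inr {e : J ⊕ J → ℤ} {τ : ℕ} (hpos : 0 ≤ e ∘ Sum.inr)
    (hτ : l1Norm (e ∘ Sum.inr) = τ + 1) :
    ∃ (j : J) (e' : J ⊕ J → ℤ), e = e' + Pi.single (Sum.inr j) 1 ∧ 0 ≤ e' ∘ Sum.inr ∧
      l1Norm (e' ∘ Sum.inr) = τ ∧ l1Norm e = l1Norm e' + 1 := by
  obtain ⟨j, hj⟩ : ∃ j, e (Sum.inr j) ≠ 0 := by
    by_contra! hzero
    simp [l1Norm, hzero] at hτ
  have hj_pos : 0 ≤ e (Sum.inr j) := hpos j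
  have he' : (e + Pi.single (Sum.inr j) (-1)) ∘ Sum.inr = e ∘ Sum.inr + Pi.single j (-1) := by
    ext j'
    simp [Pi.single_apply]
  refine ⟨j, e + Pi.single (Sum.inr j) (-1), by simp [add_assoc, ← Pi.single_add], ?_, ?_, ?_⟩
  · intro j'
    have hj' : 0 ≤ e (Sum.inr j') := hpos j'
    rw [he', Pi.add_apply, Pi.single_apply]
    split_ifs with h
    · subst h
      simp only [Function.comp_apply, Pi.zero_apply]
      omega
    · simpa using hj'
  · have hadd := l1Norm_add_single (e ∘ Sum.inr) j (-1)
    rw [he']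
    simp only [Function.comp_apply] at hadd
    omega
  · have hadd := l1Norm_add_single e (Sum.inr j) (-1)
    omega

namespace BaumslagRelations

theorem listEval_shift (H : BaumslagRelations R a g m) (h : J ⊕ J → ℤ) {B : ℕ}
    {L : List (SignedTerm I J)} (hL : ∀ x ∈ L, l1Norm x.exp ≤ B) :
    AreaDistLe R (powProd g h * listEval a g L * (powProd g h)⁻¹)
      (listEval a g (L.map (shift h))) (L.length * (2 * (l1Norm h * B))) := by
  induction L with
  | nil => simpa using AreaDistLe.refl (R := R) (1 : G)
  | cons x L ih =>
    have hhead := (H.conj_baseConj h x.exp x.gen).zpow_units x.sign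
    rw [conj_zpow] at hhead
    have htail := ih fun y hy => hL y (List.mem_cons_of_mem x hy)
    rw [List.map_cons, listEval_cons, listEval_cons, List.length_cons, ← conj_mul, add_one_mul,
      add_comm]
    exact (hhead.mono (by gcongr; exact hL x List.mem_cons_self)).mul htail

theorem hasTFreeExpansion_baseConj (H : BaumslagRelations R a g m) (B τ : ℕ) (i : I) :
    ∀ e : J ⊕ J → ℤ, 0 ≤ e ∘ Sum.inr → l1Norm (e ∘ Sum.inr) = τ → l1Norm e ≤ B →
      HasTFreeExpansion R a g B (baseConj a g i e) (8 ^ τ) ((6 * B + 1) * 8 ^ τ) := by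
  induction τ with
  | zero =>
    intro e _ hτ hB
    have he : IsTFree e := fun j => by
      simpa [hτ] using natAbs_le_l1Norm (e ∘ Sum.inr) j
    exact (HasTFreeExpansion.of_isTFree i he hB).mono (by simp) (Nat.zero_le _)
  | succ τ IH =>
    intro e hpos hτ hB
    obtain ⟨j, e', rfl, hpos', hτ', hnorm'⟩ := exists_eq_add_single_inr hpos hτ
    have hshift (c : ℤ) (hc : c.natAbs = 1) : HasTFreeExpansion R a g B
        (baseConj a g i (e' + Pi.single (Sum.inl j) c)) (8 ^ τ) ((6 * B + 1) * 8 ^ τ) := by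
      have hcomp : (e' + Pi.single (Sum.inl j) c) ∘ Sum.inr = e' ∘ Sum.inr := by ext; simp
      have hle := l1Norm_add_le e' (Pi.single (Sum.inl j) c)
      rw [l1Norm_single] at hle
      exact IH _ (by rwa [hcomp]) (by rwa [hcomp]) (by omega)
    have hexp := HasTFreeExpansion.congr (H.baseConj_add_t e' i j)
      ((hshift 1 (by simp)).laurentProd (IH e' hpos' hτ' (by omega)) (hshift (-1) (by simp)))
    exact hexp.mono (by rw [pow_succ]; omega)
      (by rw [pow_succ]; nlinarith [Nat.one_le_pow τ 8 (by norm_num)])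

theorem hasTFreeExpansion_listEval (H : BaumslagRelations R a g m) {B : ℕ}
    {L : List (SignedTerm I J)} (hL : ∀ x ∈ L, 0 ≤ x.exp ∘ Sum.inr ∧ l1Norm x.exp ≤ B) :
    HasTFreeExpansion R a g B (listEval a g L) (L.length * 8 ^ B)
      (L.length * ((6 * B + 1) * 8 ^ B)) := by
  induction L with
  | nil => simpa using HasTFreeExpansion.one
  | cons x L ih =>
    obtain ⟨hpos, hB⟩ := hL x List.mem_cons_self
    have hτ : l1Norm (x.exp ∘ Sum.inr) ≤ B := by
      refine le_trans ?_ hB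
      rw [l1Norm, l1Norm, Fintype.sum_sum_type]
      exact Nat.le_add_left _ _
    have hpow : 8 ^ l1Norm (x.exp ∘ Sum.inr) ≤ 8 ^ B := Nat.pow_le_pow_right (by norm_num) hτ
    have hhead := ((H.hasTFreeExpansion_baseConj B _ x.gen x.exp hpos rfl hB).mono hpow
      (Nat.mul_le_mul_left _ hpow)).zpow_units x.sign
    rw [listEval_cons, List.length_cons, add_one_mul, add_one_mul, add_comm (_ * _),
      add_comm (_ * _)]
    exact hhead.mul (ih fun y hy => hL y (List.mem_cons_of_mem x hy))

end BaumslagRelations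

end SignedTerm

section UpperBound

open SignedTerm

variable {G : Type*} [Group G] {R : Set G} {I J : Type*} [Fintype J]
  {a : I → G} {g : J ⊕ J → G} {m : J → ℕ}

/-- Up to area `N`, the element `w` is a product of at most `n` factors `(aᵢ^e)^±1` followed by a
monomial in the acting generators, all exponent vectors having norm at most `n`. -/
def HasNormalForm (R : Set G) (a : I → G) (g : J ⊕ J → G) (n : ℕ) (w : G) (N : ℕ) : Prop :=
  ∃ (L : List (SignedTerm I J)) (e : J ⊕ J → ℤ), L.length ≤ n ∧ (∀ x ∈ L, l1Norm x.exp ≤ n) ∧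
    l1Norm e ≤ n ∧ AreaDistLe R w (listEval a g L * powProd g e) N

namespace HasNormalForm

variable {n N N' : ℕ} {w : G}

theorem one : HasNormalForm R a g 0 1 0 :=
  ⟨[], 0, by simp, by simp, by simp, by simpa using AreaDistLe.refl (R := R) (1 : G)⟩

theorem mono (h : HasNormalForm R a g n w N) (hN : N ≤ N') : HasNormalForm R a g n w N' := by
  obtain ⟨L, e, hlen, hL, he, hdist⟩ := h
  exact ⟨L, e, hlen, hL, he, hdist.mono hN⟩

theorem base_mul (h : HasNormalForm R a g n w N) (i : I) (ε : ℤˣ) :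
    HasNormalForm R a g (n + 1) (a i ^ (ε : ℤ) * w) N := by
  obtain ⟨L, e, hlen, hL, he, hdist⟩ := h
  refine ⟨⟨ε, i, 0⟩ :: L, e, by simpa using hlen, ?_, he.trans n.le_succ, ?_⟩
  · rintro x (_ | ⟨_, hx⟩)
    · simp
    · exact (hL x hx).trans n.le_succ
  · simpa [SignedTerm.eval, mul_assoc] using hdist.mul_left (a i ^ (ε : ℤ))

theorem acting_mul [DecidableEq J] (H : BaumslagRelations R a g m)
    (h : HasNormalForm R a g n w N) (y : J ⊕ J) (ε : ℤˣ) :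
    HasNormalForm R a g (n + 1) (g y ^ (ε : ℤ) * w) (N + (2 * n * n + n)) := by
  obtain ⟨L, e, hlen, hL, he, hdist⟩ := h
  have hε : l1Norm (Pi.single y (ε : ℤ) : J ⊕ J → ℤ) = 1 := by rw [l1Norm_single, Int.units_natAbs]
  have hnorm {f : J ⊕ J → ℤ} (hf : l1Norm f ≤ n) : l1Norm (Pi.single y (ε : ℤ) + f) ≤ n + 1 :=
    (l1Norm_add_le _ _).trans (by omega)
  refine ⟨L.map (shift (Pi.single y (ε : ℤ))), Pi.single y (ε : ℤ) + e, ?_, ?_, hnorm he, ?_⟩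
  · rw [List.length_map]
    omega
  · intro x hx
    obtain ⟨z, hz, rfl⟩ := List.mem_map.mp hx
    exact hnorm (hL z hz)
  · have hbase := H.listEval_shift (Pi.single y (ε : ℤ)) hL
    have hacting := areaDistLe_powProd_mul H.commute_acting (Pi.single y (ε : ℤ)) e
    rw [hε] at hbase hacting
    have hsplit := hbase.mul hacting
    rw [powProd_single, mul_assoc (g y ^ _ * _), inv_mul_cancel_left, mul_assoc] at hsplit
    refine ((hdist.mul_left (g y ^ (ε : ℤ))).trans hsplit).mono ?_
    have := Nat.mul_le_mul_right n hlen
    nlinarith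

theorem of_word [DecidableEq J] (H : BaumslagRelations R a g m) (l : List ((I ⊕ (J ⊕ J)) × Bool)) :
    HasNormalForm R a g l.length (FreeGroup.lift (Sum.elim a g) (FreeGroup.mk l))
      (3 * l.length ^ 3) := by
  induction l with
  | nil => simpa using one
  | cons x l ih =>
    have hletter : FreeGroup.lift (Sum.elim a g) (FreeGroup.mk (x :: l)) =
        Sum.elim a g x.1 ^ ((cond x.2 1 (-1) : ℤˣ) : ℤ) *
          FreeGroup.lift (Sum.elim a g) (FreeGroup.mk l) := by
      rcases x with ⟨x, _ | _⟩ <;> simp [FreeGroup.lift_mk]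
    rw [hletter, List.length_cons]
    rcases x with ⟨i | y, b⟩
    · exact (ih.base_mul i _).mono (by gcongr; exact Nat.le_succ _)
    · exact (ih.acting_mul H y _).mono (by nlinarith)

end HasNormalForm

namespace BaumslagRelations

variable [DecidableEq J]

theorem areaDistLe_listEval_one (H : BaumslagRelations R a g m) {B : ℕ}
    {L : List (SignedTerm I J)} (hL : ∀ x ∈ L, IsTFree x.exp ∧ l1Norm x.exp ≤ B)
    [DecidableEq (I × ∀ j, ZMod (m j))]
    (hsum : ∀ c, (L.map fun x => if x.label m = c then (x.sign : ℤ) else 0).sum = 0) :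
    AreaDistLe R (listEval a g L) 1 (L.length * L.length * 2 ^ (10 * B + 8)) := by
  refine areaDistLe_one_of_sum_sign_eq_zero (SignedTerm.eval a g) (label m) sign L
    (fun x hx y hy => ?_) (fun x hx y hy hlabel hsign => ?_) hsum
  · have hcomm := H.commCostLe_baseConj (hL x hx).1 (hL y hy).1 (hL x hx).2 (hL y hy).2
      x.gen y.gen
    simpa [SignedTerm.eval] using (hcomm.zpow_left (x.sign : ℤ)).zpow_right (y.sign : ℤ)
  · obtain ⟨ε, i, e⟩ := x
    obtain ⟨ε', i', e'⟩ := y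
    obtain ⟨rfl, hmod⟩ := Prod.ext_iff.mp hlabel
    obtain rfl : ε' = -ε := hsign
    have hdist := ((H.areaDistLe_powProd_of_modEq (hL _ hx).1 (hL _ hy).1
      (fun j => (congrFun hmod j).symm)).conj_by (a i')).zpow_units ε
    have hpair := hdist.mul_right ((baseConj a g i' e' ^ (ε : ℤ))⁻¹)
    change AreaDistLe R _ (baseConj a g i' e' ^ (ε : ℤ) * _) _ at hpair
    rw [mul_inv_cancel, ← zpow_neg, ← Units.val_neg] at hpair
    refine AreaDistLe.mono hpair ?_
    change 2 * l1Norm (e - e') ≤ _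
    have hsub := l1Norm_sub_le e e'
    have he : l1Norm e ≤ B := (hL _ hx).2
    have he' : l1Norm e' ≤ B := (hL _ hy).2
    have hlt : 10 * B + 8 < 2 ^ (10 * B + 8) := Nat.lt_two_pow_self
    omega

theorem hasTFreeExpansion_conj_listEval (H : BaumslagRelations R a g m) {n : ℕ}
    {L : List (SignedTerm I J)} (hlen : L.length ≤ n) (hL : ∀ x ∈ L, l1Norm x.exp ≤ n) :
    ∃ h, HasTFreeExpansion R a g ((Fintype.card J + 1) * n)
      (powProd g h * listEval a g L * (powProd g h)⁻¹) (n * 8 ^ ((Fintype.card J + 1) * n))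
      (n * (2 * (Fintype.card J * n * n)) + n * ((6 * ((Fintype.card J + 1) * n) + 1) *
        8 ^ ((Fintype.card J + 1) * n))) := by
  let h : J ⊕ J → ℤ := Sum.elim 0 fun _ => n
  have hnorm : l1Norm h = Fintype.card J * n := by simp [l1Norm, h]
  refine ⟨h, (HasTFreeExpansion.congr (H.listEval_shift h hL)
    (H.hasTFreeExpansion_listEval fun x hx => ?_)).mono ?_ ?_⟩
  · obtain ⟨y, hy, rfl⟩ := List.mem_map.mp hx
    have hyn := hL y hy
    refine ⟨fun j => ?_, ?_⟩
    · have := natAbs_le_l1Norm y.exp (Sum.inr j)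
      simp only [Pi.zero_apply, Function.comp_apply, shift, Pi.add_apply, h, Sum.elim_inr]
      omega
    · refine (l1Norm_add_le h y.exp).trans ?_
      rw [add_one_mul]
      omega
  · rw [List.length_map]
    gcongr
  · rw [List.length_map, hnorm]
    gcongr

theorem collection_cost_le (k n : ℕ) :
    3 * n ^ 3 + n + (n * (2 * (k * n * n)) + n * ((6 * ((k + 1) * n) + 1) * 8 ^ ((k + 1) * n)) +
      n * 8 ^ ((k + 1) * n) * (n * 8 ^ ((k + 1) * n)) * 2 ^ (10 * ((k + 1) * n) + 8)) ≤
    2 ^ (18 * ((k + 1) * n) + 9) := by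
  have hkn : k * n ≤ (k + 1) * n := Nat.mul_le_mul_right n k.le_succ
  have hn : n ≤ (k + 1) * n := Nat.le_mul_of_pos_left n k.succ_pos
  set B := (k + 1) * n
  set x := 2 ^ B with hx
  have hB : B ≤ x := Nat.lt_two_pow_self.le
  have hx₁ : 1 ≤ x := Nat.one_le_two_pow
  have hpow (d : ℕ) (hd : d ≤ 18) : x ^ d ≤ x ^ 18 := Nat.pow_le_pow_right hx₁ hd
  have h8 : 8 ^ B = x ^ 3 := by
    rw [hx, show 8 = 2 ^ 3 by norm_num, ← pow_mul, ← pow_mul, mul_comm]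
  have h10 : 2 ^ (10 * B + 8) = 256 * x ^ 10 := by rw [hx, ← pow_mul]; ring
  have h18 : 2 ^ (18 * B + 9) = 512 * x ^ 18 := by rw [hx, ← pow_mul]; ring
  rw [h8, h10, h18]
  calc
    _ ≤ 3 * x ^ 3 + x + (x * (2 * (x * x)) + x * ((6 * x + x) * x ^ 3) +
          x * x ^ 3 * (x * x ^ 3) * (256 * x ^ 10)) := by gcongr <;> omega
    _ = 5 * x ^ 3 + x ^ 1 + 7 * x ^ 5 + 256 * x ^ 18 := by ring
    _ ≤ 512 * x ^ 18 := by
      have := hpow 3 (by norm_num)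
      have := hpow 1 (by norm_num)
      have := hpow 5 (by norm_num)
      omega

theorem areaLe_of_map_eq_one (H : BaumslagRelations R a g m) [DecidableEq (I × ∀ j, ZMod (m j))]
    {K : Type*} [Group K] {φ : G →* K} (hφ : ∀ r ∈ R, φ r = 1)
    (hacting : ∀ (L : List (SignedTerm I J)) (e : J ⊕ J → ℤ),
      φ (listEval a g L * powProd g e) = 1 → IsTFree e ∧ ∀ j, (e (Sum.inl j) : ZMod (m j)) = 0)
    (hbase : ∀ L : List (SignedTerm I J), (∀ x ∈ L, IsTFree x.exp) → φ (listEval a g L) = 1 →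
      ∀ c, (L.map fun x => if x.label m = c then (x.sign : ℤ) else 0).sum = 0)
    {w : G} {n : ℕ} (hw : HasNormalForm R a g n w (3 * n ^ 3)) (hwφ : φ w = 1) :
    AreaLe R w (2 ^ (18 * ((Fintype.card J + 1) * n) + 9)) := by
  obtain ⟨L, e, hlen, hL, he, hdist⟩ := hw
  obtain ⟨he_free, he_mod⟩ := hacting L e (by rw [← hdist.map_eq hφ, hwφ])
  have he_one := H.areaDistLe_powProd_of_modEq (f := 0) he_free (fun _ => rfl)
    (fun j => by simpa using he_mod j)
  rw [sub_zero, powProd_zero] at he_one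
  have hw_list := hdist.trans (he_one.mul_left (listEval a g L))
  rw [mul_one] at hw_list
  obtain ⟨h, L', hL', hlen', hconj⟩ := H.hasTFreeExpansion_conj_listEval hlen hL
  have hL'φ : φ (listEval a g L') = 1 := by
    rw [← hconj.map_eq hφ, map_mul, map_mul, ← hw_list.map_eq hφ, hwφ, mul_one, ← map_mul,
      mul_inv_cancel, map_one]
  have hcancel := hconj.trans
    (H.areaDistLe_listEval_one hL' (hbase L' (fun x hx => (hL' x hx).1) hL'φ))
  have hlist := hcancel.conj (powProd g h)⁻¹
  rw [inv_inv, mul_one, inv_mul_cancel, mul_assoc (powProd g h)⁻¹, inv_mul_cancel_right,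
    inv_mul_cancel_left] at hlist
  refine (hw_list.trans hlist).areaLe.mono (le_trans ?_ (collection_cost_le (Fintype.card J) n))
  gcongr

end BaumslagRelations

end UpperBound

section Relators

open scoped commutatorElement

variable {G : Type*} [Group G] {I J : Type*} [Fintype J] [DecidableEq J]

/-- The relators of Baumslag's presentation, read in a group with chosen elements `aᵢ`, `g = (s, t)`
and moduli `m`; in a free group on the letters `aᵢ`, `sⱼ`, `tⱼ` they are those of the finitely
presented group into which the wreath product will be embedded. -/
inductive IsBaumslagRelator (a : I → G) (g : J ⊕ J → G) (m : J → ℕ) : G → Prop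
  | commute_acting (x y : J ⊕ J) : IsBaumslagRelator a g m ⁅g x, g y⁆
  | s_pow (j : J) : IsBaumslagRelator a g m (g (Sum.inl j) ^ m j)
  | t_conj (i : I) (j : J) : IsBaumslagRelator a g m
      (baseConj a g i (Pi.single (Sum.inr j) 1) *
        (laurentProd (baseConj a g i (Pi.single (Sum.inl j) 1)) (a i)
          (baseConj a g i (Pi.single (Sum.inl j) (-1))))⁻¹)
  | commute_base (i l : I) (e : J ⊕ J → ℤ) (hbox : ∀ j, (e (Sum.inl j)).natAbs ≤ 2)
      (he : IsTFree e) : IsBaumslagRelator a g m ⁅a i, baseConj a g l e⁆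

theorem IsBaumslagRelator.map {K : Type*} [Group K] (φ : G →* K) {a : I → G} {g : J ⊕ J → G}
    {m : J → ℕ} {r : G} (hr : IsBaumslagRelator a g m r) :
    IsBaumslagRelator (fun i => φ (a i)) (fun y => φ (g y)) m (φ r) := by
  cases hr with
  | commute_acting x y =>
    rw [map_commutatorElement]
    exact .commute_acting x y
  | s_pow j =>
    rw [map_pow]
    exact .s_pow (g := fun y => φ (g y)) j
  | t_conj i j =>
    simp only [laurentProd, map_mul, map_inv, map_pow, map_baseConj]
    exact .t_conj (a := fun i => φ (a i)) i j
  | commute_base i l e hbox he =>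
    rw [map_commutatorElement, map_baseConj]
    exact .commute_base (a := fun i => φ (a i)) i l e hbox he

theorem finite_setOf_isBaumslagRelator [Finite I] (a : I → G) (g : J ⊕ J → G) (m : J → ℕ) :
    {r | IsBaumslagRelator a g m r}.Finite := by
  have hbox : {e : J ⊕ J → ℤ | (∀ j, (e (Sum.inl j)).natAbs ≤ 2) ∧ IsTFree e}.Finite := by
    refine (Set.finite_Icc (-2 : J ⊕ J → ℤ) 2).subset fun e ⟨hs, ht⟩ => ?_
    rw [Set.mem_Icc, Pi.le_def, Pi.le_def]
    refine ⟨fun y => ?_, fun y => ?_⟩ <;> rcases y with j | j <;>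
      first
      | have := hs j; simp only [Pi.neg_apply, Pi.ofNat_apply]; omega
      | simp [ht j]
  refine ((((Set.finite_range fun p : (J ⊕ J) × (J ⊕ J) => ⁅g p.1, g p.2⁆).union
    (Set.finite_range fun j => g (Sum.inl j) ^ m j)).union
    (Set.finite_range fun p : I × J => baseConj a g p.1 (Pi.single (Sum.inr p.2) 1) *
      (laurentProd (baseConj a g p.1 (Pi.single (Sum.inl p.2) 1)) (a p.1)
        (baseConj a g p.1 (Pi.single (Sum.inl p.2) (-1))))⁻¹)).union
    (((Set.finite_univ (α := I × I)).prod hbox).image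
      fun p => ⁅a p.1.1, baseConj a g p.1.2 p.2⁆)).subset fun r hr => ?_
  cases hr with
  | commute_acting x y => exact .inl (.inl (.inl ⟨(x, y), rfl⟩))
  | s_pow j => exact .inl (.inl (.inr ⟨j, rfl⟩))
  | t_conj i j => exact .inl (.inr ⟨(i, j), rfl⟩)
  | commute_base i l e hs ht => exact .inr ⟨((i, l), e), ⟨trivial, hs, ht⟩, rfl⟩

theorem baumslagRelations_isBaumslagRelator (a : I → G) (g : J ⊕ J → G) (m : J → ℕ) :
    BaumslagRelations {r | IsBaumslagRelator a g m r} a g m where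
  commute_acting x y := .of_mem (.commute_acting x y)
  s_pow j := by
    rw [AreaDistLe, inv_one, mul_one]
    exact .of_mem (.s_pow j)
  t_conj i j := AreaLe.of_mem (.t_conj i j)
  commute_base i l e hbox he := .of_mem (.commute_base i l e hbox he)

end Relators

section GroupFractionRing

open AddMonoidAlgebra

variable {T : Type*} [AddCommGroup T]

/-- The element `s + s⁻¹ - 3` of the integral group ring of `T`. -/
noncomputable def laurentElement (s : T) : AddMonoidAlgebra ℤ T :=
  single s 1 + single (-s) 1 - single 0 3

/-- At a coefficient of `x` of largest absolute value, `3 * x` cannot be cancelled by the two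
translates of `x`. -/
theorem laurentElement_mem_nonZeroDivisors (s : T) :
    laurentElement s ∈ nonZeroDivisors (AddMonoidAlgebra ℤ T) := by
  rw [mem_nonZeroDivisors_iff_right]
  intro x hx
  have hcoeff (θ : T) : x.coeff (θ - s) + x.coeff (θ + s) = 3 * x.coeff θ := by
    have h := congrArg (fun y => y.coeff θ) hx
    simp only [laurentElement, mul_add, mul_sub, coeff_add, coeff_sub, Finsupp.add_apply,
      Finsupp.sub_apply, coeff_mul_single_apply, coeff_zero, Finsupp.zero_apply, neg_neg,
      ← sub_eq_add_neg, sub_zero] at h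
    linarith
  by_contra hne
  have hsupp : x.coeff.support.Nonempty :=
    Finsupp.support_nonempty_iff.mpr fun h => hne (coeff_eq_zero.mp h)
  obtain ⟨θ, hθ, hmax⟩ := Finset.exists_max_image x.coeff.support (fun t => |x.coeff t|) hsupp
  have hle (t : T) : |x.coeff t| ≤ |x.coeff θ| := by
    by_cases ht : t ∈ x.coeff.support
    · exact hmax t ht
    · simp [Finsupp.notMem_support_iff.mp ht]
  have hpos : 0 < |x.coeff θ| := abs_pos.mpr (Finsupp.mem_support_iff.mp hθ)
  have htri := abs_add_le (x.coeff (θ - s)) (x.coeff (θ + s))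
  rw [hcoeff, abs_mul, abs_of_pos three_pos] at htri
  linarith [hle (θ - s), hle (θ + s)]

/-- The total ring of fractions of the integral group ring of `T`. -/
abbrev GroupFractionRing (T : Type*) [AddCommGroup T] := FractionRing (AddMonoidAlgebra ℤ T)

/-- The elements of `T` as units of the total ring of fractions of the group ring. -/
noncomputable def groupUnit (T : Type*) [AddCommGroup T] :
    Multiplicative T →* (GroupFractionRing T)ˣ :=
  MonoidHom.toHomUnits ((algebraMap (AddMonoidAlgebra ℤ T) (GroupFractionRing T) :
    AddMonoidAlgebra ℤ T →* GroupFractionRing T).comp (of ℤ T))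

theorem val_groupUnit (t : Multiplicative T) :
    (groupUnit T t : GroupFractionRing T) = algebraMap _ _ (single t.toAdd 1 : ℤ[T]) :=
  rfl

/-- The element `s + s⁻¹ - 3` as a unit of the total ring of fractions. -/
noncomputable def laurentUnit (s : T) : (GroupFractionRing T)ˣ :=
  (IsLocalization.map_units (GroupFractionRing T)
    (⟨laurentElement s, laurentElement_mem_nonZeroDivisors s⟩ : nonZeroDivisors _)).unit

theorem val_laurentUnit (s : T) :
    (laurentUnit s : GroupFractionRing T) = groupUnit T (Multiplicative.ofAdd s) +
      ((groupUnit T (Multiplicative.ofAdd s))⁻¹ : (GroupFractionRing T)ˣ) - 3 := by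
  have hthree : (3 : GroupFractionRing T) = algebraMap _ _ (single 0 3 : ℤ[T]) := by
    rw [← map_ofNat (algebraMap (AddMonoidAlgebra ℤ T) (GroupFractionRing T)) 3]
    rfl
  rw [← map_inv, val_groupUnit, val_groupUnit, hthree, ← map_add, ← map_sub]
  rfl

end GroupFractionRing

section Metabelian

theorem isMetabelian_semidirectProduct {N Q : Type*} [CommGroup N] [CommGroup Q]
    (f : Q →* MulAut N) : IsMetabelian (SemidirectProduct N Q f) := by
  intro x y hx hy
  have hright (z : SemidirectProduct N Q f) (hz : z ∈ commutator (SemidirectProduct N Q f)) :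
      z.right = 1 :=
    Abelianization.commutator_subset_ker SemidirectProduct.rightHom hz
  ext
  · simp [hright x hx, hright y hy, mul_comm]
  · simp [hright x hx, hright y hy]

theorem isMetabelian_iff_derivedSeries_two_eq_bot {G : Type*} [Group G] :
    IsMetabelian G ↔ derivedSeries G 2 = ⊥ := by
  rw [derivedSeries_succ, derivedSeries_one, Subgroup.commutator_eq_bot_iff_le_centralizer]
  exact ⟨fun h a ha b hb => h b a hb ha, fun h a b ha hb => h hb a ha⟩

theorem IsMetabelian.derivedSeries_two_le_ker {G K : Type*} [Group G] [Group K]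
    (hK : IsMetabelian K) (f : G →* K) : derivedSeries G 2 ≤ f.ker := by
  rw [← Subgroup.map_eq_bot_iff, eq_bot_iff,
    ← isMetabelian_iff_derivedSeries_two_eq_bot.1 hK]
  exact map_derivedSeries_le_derivedSeries f 2

theorem IsMetabelian.of_injective {G K : Type*} [Group G] [Group K] (hK : IsMetabelian K)
    {f : G →* K} (hf : Injective f) : IsMetabelian G := by
  rw [isMetabelian_iff_derivedSeries_two_eq_bot, eq_bot_iff, ← (MonoidHom.ker_eq_bot_iff f).2 hf]
  exact hK.derivedSeries_two_le_ker f

end Metabelian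

section ScalingGroup

/-- The action of `Kˣ × Q` on `K ^ I` in which units scale vectors and `Q` acts trivially. -/
noncomputable def scalingAction (K I Q : Type*) [Ring K] [Group Q] :
    Kˣ × Q →* MulAut (Multiplicative (I → K)) :=
  (MulAutMultiplicative (I → K)).symm.toMonoidHom.comp
    ((DistribMulAction.toAddAut Kˣ (I → K)).comp (MonoidHom.fst Kˣ Q))

/-- The semidirect product `K ^ I ⋊ (Kˣ × Q)` in which units scale vectors and `Q` acts trivially;
the factor `Q` keeps apart elements that act by the same scalar. -/
abbrev ScalingGroup (K I Q : Type*) [Ring K] [Group Q] :=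
  SemidirectProduct (Multiplicative (I → K)) (Kˣ × Q) (scalingAction K I Q)

variable {K I Q : Type*}

/-- A vector, as an element of the base of `K ^ I ⋊ (Kˣ × Q)`. -/
noncomputable def vec [Ring K] [Group Q] (v : I → K) : ScalingGroup K I Q :=
  SemidirectProduct.inl (Multiplicative.ofAdd v)

section Ring

variable [Ring K] [Group Q]

theorem vec_injective : Injective (vec : (I → K) → ScalingGroup K I Q) :=
  SemidirectProduct.inl_injective.comp Multiplicative.ofAdd.injective

theorem vec_zero : (vec 0 : ScalingGroup K I Q) = 1 := rfl

theorem vec_add (v w : I → K) : (vec (v + w) : ScalingGroup K I Q) = vec v * vec w := by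
  rw [vec, ofAdd_add, map_mul]
  rfl

theorem vec_neg (v : I → K) : (vec (-v) : ScalingGroup K I Q) = (vec v)⁻¹ := by
  rw [vec, ofAdd_neg, map_inv]
  rfl

theorem vec_zsmul (n : ℤ) (v : I → K) : (vec (n • v) : ScalingGroup K I Q) = vec v ^ n := by
  rw [vec, ofAdd_zsmul, map_zpow]
  rfl

theorem commute_vec (v w : I → K) : Commute (vec v : ScalingGroup K I Q) (vec w) := by
  rw [Commute, SemiconjBy, ← vec_add, ← vec_add, add_comm]

theorem inr_mul_vec_mul_inr_inv (q : Kˣ × Q) (v : I → K) :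
    (SemidirectProduct.inr q * vec v * (SemidirectProduct.inr q)⁻¹ : ScalingGroup K I Q) =
      vec ((q.1 : K) • v) := by
  rw [← map_inv]
  exact (SemidirectProduct.inl_aut q (Multiplicative.ofAdd v)).symm

variable [DecidableEq I] {J : Type*} [Fintype J]

theorem baseConj_vec (q : J ⊕ J → Kˣ × Q) (i : I) (e : J ⊕ J → ℤ) :
    baseConj (fun i => (vec (Pi.single i 1) : ScalingGroup K I Q))
      (fun y => SemidirectProduct.inr (q y)) i e =
      vec (((powProd q e).1 : K) • Pi.single i 1) := by
  rw [baseConj, ← map_powProd, inr_mul_vec_mul_inr_inv]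

theorem listEval_vec (q : J ⊕ J → Kˣ × Q) (L : List (SignedTerm I J)) :
    SignedTerm.listEval (fun i => (vec (Pi.single i 1) : ScalingGroup K I Q))
      (fun y => SemidirectProduct.inr (q y)) L =
      vec (L.map fun x => (x.sign : ℤ) • ((powProd q x.exp).1 : K) •
        (Pi.single x.gen 1 : I → K)).sum := by
  induction L with
  | nil => rfl
  | cons x L ih =>
    rw [SignedTerm.listEval_cons, ih, List.map_cons, List.sum_cons, vec_add, SignedTerm.eval,
      baseConj_vec, vec_zsmul]

end Ring

theorem IsBaumslagRelator.eq_one [CommRing K] [CommGroup Q] [DecidableEq I] {J : Type*}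
    [Fintype J] [DecidableEq J] {q : J ⊕ J → Kˣ × Q} {m : J → ℕ}
    (hpow : ∀ j, q (Sum.inl j) ^ m j = 1)
    (hlaurent : ∀ j, ((q (Sum.inr j)).1 : K) =
      (q (Sum.inl j)).1 + ((q (Sum.inl j)).1⁻¹ : Kˣ) - 3)
    {r : ScalingGroup K I Q}
    (hr : IsBaumslagRelator (fun i => vec (Pi.single i 1)) (fun y => SemidirectProduct.inr (q y)) m
      r) : r = 1 := by
  cases hr with
  | commute_acting x y =>
    rw [commutatorElement_eq_one_iff_commute]
    exact (Commute.all (q x) (q y)).map SemidirectProduct.inr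
  | s_pow j => rw [← map_pow, hpow, map_one]
  | t_conj i j =>
    rw [mul_inv_eq_one]
    simp only [baseConj_vec, laurentProd, ← vec_neg, pow_succ, pow_zero, one_mul, ← vec_add]
    congr 1
    funext k
    simp only [powProd_single, zpow_one, zpow_neg_one, hlaurent, Prod.fst_inv, Pi.add_apply,
      Pi.smul_apply, Pi.neg_apply, smul_eq_mul]
    ring
  | commute_base i l e hbox he =>
    rw [commutatorElement_eq_one_iff_commute, baseConj_vec]
    exact commute_vec _ _

end ScalingGroup

section BaumslagModel

open Multiplicative

variable {I J : Type*}

/-- The scaling group over the fractions of the group ring of `∏ j, ℤ/mⱼ` in which Baumslag's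
presentation is realized. -/
abbrev BaumslagModel (I : Type*) (m : J → ℕ) :=
  ScalingGroup (GroupFractionRing (∀ j, ZMod (m j))) I
    (Multiplicative (∀ j, ZMod (m j)) × Multiplicative (J → ℤ))

variable [DecidableEq J] (m : J → ℕ)

/-- The images of `sⱼ` and `tⱼ` in the model: `sⱼ` acts as the group element `s`, and `tⱼ` as
`s + s⁻¹ - 3`. -/
noncomputable def actingGen : J ⊕ J → (GroupFractionRing (∀ j, ZMod (m j)))ˣ ×
    Multiplicative (∀ j, ZMod (m j)) × Multiplicative (J → ℤ)
  | Sum.inl j => (groupUnit _ (ofAdd (Pi.single j 1)), ofAdd (Pi.single j 1), 1)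
  | Sum.inr j => (laurentUnit (Pi.single j 1), 1, ofAdd (Pi.single j 1))

theorem actingGen_inl_pow (j : J) : actingGen m (Sum.inl j) ^ m j = 1 := by
  have hsingle : ofAdd (Pi.single j 1 : ∀ j, ZMod (m j)) ^ m j = 1 := by
    rw [← ofAdd_nsmul, ← Pi.single_smul]
    simp
  simp [actingGen, ← map_pow, hsingle]

theorem fst_actingGen_inr (j : J) :
    ((actingGen m (Sum.inr j)).1 : GroupFractionRing (∀ j, ZMod (m j))) =
      (actingGen m (Sum.inl j)).1 +
        ((actingGen m (Sum.inl j)).1⁻¹ : (GroupFractionRing (∀ j, ZMod (m j)))ˣ) - 3 :=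
  val_laurentUnit _

/-- The homomorphism sending the letters of Baumslag's presentation to the standard basis vectors
and to the acting generators of the model. -/
noncomputable def toBaumslagModel (I : Type*) [DecidableEq I] :
    FreeGroup (I ⊕ (J ⊕ J)) →* BaumslagModel I m :=
  FreeGroup.lift (Sum.elim (fun i => vec (Pi.single i 1))
    (fun y => SemidirectProduct.inr (actingGen m y)))

variable [Fintype J]

theorem snd_powProd_actingGen (e : J ⊕ J → ℤ) :
    (powProd (actingGen m) e).2 =
      (ofAdd fun j => (e (Sum.inl j) : ZMod (m j)), ofAdd fun j => e (Sum.inr j)) := by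
  rw [powProd_eq_prod, Prod.snd_prod, Fintype.prod_sum_type]
  refine Prod.ext (toAdd.injective (funext fun j => ?_)) (toAdd.injective (funext fun j => ?_))
  · suffices ∑ x, (e (Sum.inl x) : ZMod (m j)) * (Pi.single x 1 : ∀ j, ZMod (m j)) j =
        e (Sum.inl j) by
      simpa [actingGen, Prod.fst_prod, toAdd_prod, Finset.sum_apply]
    rw [Fintype.sum_eq_single j fun x hx => by simp [Pi.single_eq_of_ne hx.symm]]
    simp
  · simp [actingGen, Prod.snd_prod, toAdd_prod, Finset.sum_apply, Pi.single_apply]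

theorem fst_powProd_actingGen {e : J ⊕ J → ℤ} (he : IsTFree e) :
    (powProd (actingGen m) e).1 =
      groupUnit _ (ofAdd fun j => (e (Sum.inl j) : ZMod (m j))) := by
  have hsnd : (powProd (actingGen m) e).2.1 = ofAdd fun j => (e (Sum.inl j) : ZMod (m j)) :=
    congrArg Prod.fst (snd_powProd_actingGen m e)
  rw [← hsnd]
  simp only [powProd_eq_prod, Prod.fst_prod, Prod.snd_prod, map_prod, Fintype.prod_sum_type,
    he _, zpow_zero, Finset.prod_const_one, mul_one]
  exact Finset.prod_congr rfl fun j _ => by simp [actingGen]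

variable {m} [DecidableEq I]

theorem IsBaumslagRelator.toBaumslagModel_eq_one {r : FreeGroup (I ⊕ (J ⊕ J))}
    (hr : IsBaumslagRelator (fun i => .of (Sum.inl i)) (fun y => .of (Sum.inr y)) m r) :
    toBaumslagModel m I r = 1 :=
  IsBaumslagRelator.eq_one (actingGen_inl_pow m) (fst_actingGen_inr m)
    (by simpa [toBaumslagModel] using hr.map (toBaumslagModel m I))

/-- The coordinate `i` of the vector given by a list of factors, as a group ring element; meaningful
for factors free of `t`-letters. -/
noncomputable def listCoord (m : J → ℕ) (L : List (SignedTerm I J)) (i : I) :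
    AddMonoidAlgebra ℤ (∀ j, ZMod (m j)) :=
  (L.map fun x => if x.gen = i then AddMonoidAlgebra.single (x.label m).2 (x.sign : ℤ) else 0).sum

omit [DecidableEq J] [Fintype J] in
theorem coeff_listCoord [DecidableEq (I × ∀ j, ZMod (m j))] (L : List (SignedTerm I J)) (i : I)
    (θ : ∀ j, ZMod (m j)) :
    (listCoord m L i).coeff θ =
      (L.map fun x => if x.label m = (i, θ) then (x.sign : ℤ) else 0).sum := by
  induction L with
  | nil => simp [listCoord]
  | cons x L ih =>
    simp only [listCoord, List.map_cons, List.sum_cons] at ih ⊢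
    rw [AddMonoidAlgebra.coeff_add, Finsupp.add_apply, ih]
    congr 1
    by_cases hi : x.gen = i
    · by_cases hθ : (x.label m).2 = θ
      · rw [if_pos hi, if_pos (Prod.ext hi hθ), hθ, AddMonoidAlgebra.coeff_single,
          Finsupp.single_eq_same]
      · rw [if_pos hi, if_neg fun h => hθ (congrArg Prod.snd h), AddMonoidAlgebra.coeff_single,
          Finsupp.single_eq_of_ne' hθ]
    · rw [if_neg hi, if_neg fun h => hi (congrArg Prod.fst h)]
      rfl

theorem listEval_toBaumslagModel {L : List (SignedTerm I J)} (hL : ∀ x ∈ L, IsTFree x.exp) :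
    toBaumslagModel m I (SignedTerm.listEval (fun i => .of (Sum.inl i))
      (fun y => .of (Sum.inr y)) L) = vec fun i => algebraMap _ _ (listCoord m L i) := by
  rw [SignedTerm.map_listEval]
  simp only [toBaumslagModel, FreeGroup.lift_apply_of, Sum.elim_inl, Sum.elim_inr, listEval_vec]
  congr 1
  funext i
  induction L with
  | nil => simp [listCoord]
  | cons x L ih =>
    rw [List.map_cons, List.sum_cons, Pi.add_apply, ih fun y hy => hL y (by simp [hy]), listCoord,
      listCoord, List.map_cons, List.sum_cons, map_add, fst_powProd_actingGen m (hL x (by simp)),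
      val_groupUnit]
    congr 1
    by_cases hi : x.gen = i
    · subst hi
      rw [if_pos rfl, Pi.smul_apply, Pi.smul_apply, Pi.single_eq_same, smul_eq_mul, mul_one,
        ← map_zsmul, AddMonoidAlgebra.smul_single, zsmul_one, Int.cast_id]
      rfl
    · simp [hi, Ne.symm hi]

theorem isTFree_and_intCast_eq_zero_of_toBaumslagModel {L : List (SignedTerm I J)} {e : J ⊕ J → ℤ}
    (h : toBaumslagModel m I (SignedTerm.listEval (fun i => .of (Sum.inl i))
      (fun y => .of (Sum.inr y)) L * powProd (fun y => .of (Sum.inr y)) e) = 1) :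
    IsTFree e ∧ ∀ j, (e (Sum.inl j) : ZMod (m j)) = 0 := by
  rw [map_mul, SignedTerm.map_listEval, map_powProd] at h
  simp only [toBaumslagModel, FreeGroup.lift_apply_of, Sum.elim_inl, Sum.elim_inr, listEval_vec,
    ← map_powProd] at h
  have hright : (powProd (actingGen m) e).2 = 1 := by
    simpa [vec] using congrArg (fun z => z.right.2) h
  rw [snd_powProd_actingGen] at hright
  exact ⟨fun j => congrFun (ofAdd.injective (congrArg Prod.snd hright)) j,
    fun j => congrFun (ofAdd.injective (congrArg Prod.fst hright)) j⟩

theorem sum_sign_eq_zero_of_toBaumslagModel [DecidableEq (I × ∀ j, ZMod (m j))]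
    {L : List (SignedTerm I J)} (hL : ∀ x ∈ L, IsTFree x.exp)
    (h : toBaumslagModel m I (SignedTerm.listEval (fun i => .of (Sum.inl i))
      (fun y => .of (Sum.inr y)) L) = 1) (c : I × ∀ j, ZMod (m j)) :
    (L.map fun x => if x.label m = c then (x.sign : ℤ) else 0).sum = 0 := by
  rw [listEval_toBaumslagModel hL, ← vec_zero] at h
  have hzero : algebraMap _ (GroupFractionRing (∀ j, ZMod (m j))) (listCoord m L c.1) = 0 :=
    congrFun (vec_injective h) c.1
  rw [FaithfulSMul.algebraMap_eq_zero_iff] at hzero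
  rw [← coeff_listCoord, hzero]
  rfl

end BaumslagModel

section DehnFunction

theorem freeNorm_eq_length_toWord {X : Type*} [DecidableEq X] (w : FreeGroup X) :
    freeNorm w = w.toWord.length := by
  unfold freeNorm
  congr!

theorem exists_isDehnFunctionOf {X : Type*} {R : Set (FreeGroup X)} {f : ℕ → ℕ} (hf : Monotone f)
    (hR : ∀ w ∈ Subgroup.normalClosure R, AreaLe R w (f (freeNorm w))) :
    ∃ δ, IsDehnFunctionOf R δ ∧ ∀ n, δ n ≤ f n := by
  have hmem (n : ℕ) :
      f n ∈ {N | ∀ w ∈ Subgroup.normalClosure R, freeNorm w ≤ n → AreaLe R w N} :=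
    fun w hw hn => (hR w hw).mono (hf hn)
  exact ⟨fun n => sInf {N | ∀ w ∈ Subgroup.normalClosure R, freeNorm w ≤ n → AreaLe R w N},
    fun n => ⟨Nat.sInf_mem ⟨_, hmem n⟩, fun _ hN => Nat.sInf_le hN⟩, fun n => Nat.sInf_le (hmem n)⟩

theorem dominates_two_pow_of_le {δ : ℕ → ℕ} {c d : ℕ} (hδ : ∀ n, δ n ≤ 2 ^ (c * n + d)) :
    Dominates δ fun n => 2 ^ n := by
  refine ⟨2 ^ d + c, by positivity, fun n => ?_⟩
  calc δ n ≤ 2 ^ d * 2 ^ (c * n) := by simpa only [pow_add, mul_comm] using hδ n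
    _ ≤ (2 ^ d + c) * 2 ^ ((2 ^ d + c) * n) := by gcongr <;> simp
    _ ≤ _ := (Nat.le_add_right _ _).trans (Nat.le_add_right _ _)

end DehnFunction

section BaumslagGroup

variable {I J : Type*} [Fintype J] [DecidableEq J]

/-- The relators of Baumslag's presentation on the letters `aᵢ`, `sⱼ`, `tⱼ`. -/
def baumslagRelators (I : Type*) (m : J → ℕ) : Set (FreeGroup (I ⊕ (J ⊕ J))) :=
  {r | IsBaumslagRelator (fun i => .of (Sum.inl i)) (fun y => .of (Sum.inr y)) m r}

/-- Baumslag's group, given by its presentation. -/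
abbrev BaumslagGroup (I : Type*) (m : J → ℕ) :=
  FreeGroup (I ⊕ (J ⊕ J)) ⧸ Subgroup.normalClosure (baumslagRelators I m)

variable [DecidableEq I] {m : J → ℕ}

theorem areaLe_of_toBaumslagModel_eq_one {w : FreeGroup (I ⊕ (J ⊕ J))}
    (hw : toBaumslagModel m I w = 1) :
    AreaLe (baumslagRelators I m) w (2 ^ (18 * ((Fintype.card J + 1) * freeNorm w) + 9)) := by
  have H := baumslagRelations_isBaumslagRelator
    (fun i => (.of (Sum.inl i) : FreeGroup (I ⊕ (J ⊕ J)))) (fun y => .of (Sum.inr y)) m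
  have hlift : FreeGroup.lift (Sum.elim (fun i => FreeGroup.of (Sum.inl i))
      fun y => .of (Sum.inr y)) = MonoidHom.id (FreeGroup (I ⊕ (J ⊕ J))) := by
    ext (i | y) <;> simp
  have hnf := HasNormalForm.of_word H w.toWord
  rw [hlift, FreeGroup.mk_toWord, MonoidHom.id_apply, ← freeNorm_eq_length_toWord] at hnf
  classical
  exact H.areaLe_of_map_eq_one (fun _ hr => IsBaumslagRelator.toBaumslagModel_eq_one hr)
    (fun _ _ => isTFree_and_intCast_eq_zero_of_toBaumslagModel)
    (fun _ hL => sum_sign_eq_zero_of_toBaumslagModel hL) hnf hw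

theorem ker_toBaumslagModel :
    (toBaumslagModel m I).ker = Subgroup.normalClosure (baumslagRelators I m) :=
  le_antisymm (fun _ hw => (areaLe_of_toBaumslagModel_eq_one hw).mem_normalClosure)
    (Subgroup.normalClosure_le_normal fun _ hr => IsBaumslagRelator.toBaumslagModel_eq_one hr)

/-- Baumslag's group as the image of the free group in the model. -/
noncomputable def BaumslagGroup.equivRange (I : Type*) [DecidableEq I] (m : J → ℕ) :
    BaumslagGroup I m ≃* (toBaumslagModel m I).range :=
  (QuotientGroup.quotientMulEquivOfEq ker_toBaumslagModel.symm).trans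
    (QuotientGroup.quotientKerEquivRange _)

omit [DecidableEq I] in
theorem BaumslagGroup.isMetabelian : IsMetabelian (BaumslagGroup I m) := by
  classical
  exact (isMetabelian_semidirectProduct _).of_injective
    (f := (Subgroup.subtype _).comp (equivRange I m).toMonoidHom)
    (Subtype.val_injective.comp (equivRange I m).injective)

omit [DecidableEq I] in
theorem exists_isDehnFunctionOf_baumslagRelators :
    ∃ δ, IsDehnFunctionOf (baumslagRelators I m) δ ∧ Dominates δ fun n => 2 ^ n := by
  obtain ⟨δ, hδ, hle⟩ := exists_isDehnFunctionOf (R := baumslagRelators I m)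
    (f := fun n => 2 ^ (18 * ((Fintype.card J + 1) * n) + 9))
    (fun _ _ h => by dsimp only; gcongr; omega)
    fun w hw => by
      classical
      exact areaLe_of_toBaumslagModel_eq_one
        (by rwa [← MonoidHom.mem_ker, ker_toBaumslagModel])
  exact ⟨δ, hδ, dominates_two_pow_of_le fun n => (hle n).trans_eq (by rw [mul_assoc])⟩

end BaumslagGroup

section WreathEmbedding

open Multiplicative SemidirectProduct

variable {A S T Q I : Type*} [AddCommGroup A] [AddCommGroup S] [CommGroup T] [Group Q]

/-- The coordinate `i` of the map `⊕_T A → ℤ[S] ^ I` induced by `α : A → ℤ ^ I` and `τ : T → S`. -/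
noncomputable def wreathCoord (α : A →+ (I → ℤ)) (τ : T →* Multiplicative S) (i : I) :
    (T →₀ A) →+ AddMonoidAlgebra ℤ S :=
  Finsupp.liftAddHom fun t =>
    (AddMonoidAlgebra.singleAddHom (τ t).toAdd).comp ((Pi.evalAddMonoidHom _ i).comp α)

theorem wreathCoord_single (α : A →+ (I → ℤ)) (τ : T →* Multiplicative S) (i : I) (t : T) (a : A) :
    wreathCoord α τ i (Finsupp.single t a) = AddMonoidAlgebra.single (τ t).toAdd (α a i) :=
  Finsupp.liftAddHom_apply_single _ _ _

theorem coeff_wreathCoord (α : A →+ (I → ℤ)) {τ : T →* Multiplicative S} (hτ : Injective τ) (i : I)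
    (f : T →₀ A) (t : T) : (wreathCoord α τ i f).coeff (τ t).toAdd = α (f t) i := by
  induction f using Finsupp.induction_linear with
  | zero => simp
  | add f g hf hg => simp [hf, hg]
  | single s a =>
    rw [wreathCoord_single, AddMonoidAlgebra.coeff_single]
    rcases eq_or_ne s t with rfl | hst
    · simp
    · rw [Finsupp.single_eq_of_ne' (toAdd.injective.ne (hτ.ne hst)),
        Finsupp.single_eq_of_ne' hst]
      simp

/-- The map `⊕_T A → K ^ I` induced by `α : A → ℤ ^ I` and `τ : T → S`, where `K` is the total ring
of fractions of `ℤ[S]`. -/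
noncomputable def wreathVec (α : A →+ (I → ℤ)) (τ : T →* Multiplicative S) :
    (T →₀ A) →+ (I → GroupFractionRing S) :=
  AddMonoidHom.pi fun i => (algebraMap _ (GroupFractionRing S)).toAddMonoidHom.comp
    (wreathCoord α τ i)

theorem wreathVec_apply (α : A →+ (I → ℤ)) (τ : T →* Multiplicative S) (f : T →₀ A) (i : I) :
    wreathVec α τ f i = algebraMap _ _ (wreathCoord α τ i f) :=
  rfl

theorem wreathVec_injective {α : A →+ (I → ℤ)} {τ : T →* Multiplicative S} (hα : Injective α)
    (hτ : Injective τ) : Injective (wreathVec α τ) := by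
  refine (injective_iff_map_eq_zero _).mpr fun f hf => ?_
  ext t
  refine hα (funext fun i => ?_)
  have hcoord : algebraMap _ (GroupFractionRing S) (wreathCoord α τ i f) = 0 := congrFun hf i
  rw [FaithfulSMul.algebraMap_eq_zero_iff] at hcoord
  rw [← coeff_wreathCoord α hτ, hcoord]
  simp

theorem wreathVec_wreathShift (α : A →+ (I → ℤ)) (τ : T →* Multiplicative S) (t : T) (f : T →₀ A) :
    wreathVec α τ (wreathShift t f) =
      (groupUnit S (τ t) : GroupFractionRing S) • wreathVec α τ f := by
  induction f using Finsupp.induction_linear with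
  | zero => simp
  | add f g hf hg => simp only [map_add, hf, hg, smul_add]
  | single s a =>
    have hshift : wreathShift t (Finsupp.single s a) = Finsupp.single (t * s) a := by
      simp [wreathShift]
    funext i
    rw [hshift, Pi.smul_apply, smul_eq_mul, wreathVec_apply, wreathVec_apply, wreathCoord_single,
      wreathCoord_single, val_groupUnit, ← map_mul, AddMonoidAlgebra.single_mul_single, map_mul,
      toAdd_mul, one_mul]

/-- The elements of `S` acting by scaling; the second component makes the action faithful. -/
noncomputable def scalingEmbedding (S Q : Type*) [AddCommGroup S] [Group Q] :
    Multiplicative S →* (GroupFractionRing S)ˣ × (Multiplicative S × Q) :=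
  (groupUnit S).prod (MonoidHom.inl _ _)

/-- The map `A ≀ T → K ^ I ⋊ (Kˣ × (S × Q))` induced by `α : A → ℤ ^ I` and `τ : T → S`. -/
noncomputable def wreathToScaling (Q : Type*) [Group Q] (α : A →+ (I → ℤ))
    (τ : T →* Multiplicative S) :
    WreathProduct A T →* ScalingGroup (GroupFractionRing S) I (Multiplicative S × Q) :=
  SemidirectProduct.map (AddMonoidHom.toMultiplicative (wreathVec α τ))
    ((scalingEmbedding S Q).comp τ)
    fun t => MonoidHom.ext fun f => congrArg ofAdd (wreathVec_wreathShift α τ t f.toAdd)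

theorem wreathToScaling_injective {α : A →+ (I → ℤ)} {τ : T →* Multiplicative S} (hα : Injective α)
    (hτ : Injective τ) : Injective (wreathToScaling Q α τ) := fun _ _ h =>
  SemidirectProduct.ext (wreathVec_injective hα hτ (congrArg SemidirectProduct.left h))
    (hτ (congrArg (fun z => z.right.2.1) h))

variable [DecidableEq I]
  {H : Subgroup (ScalingGroup (GroupFractionRing S) I (Multiplicative S × Q))}

theorem vec_single_mem (hS : ∀ s, inr (scalingEmbedding S Q s) ∈ H)
    (hI : ∀ i, vec (Pi.single i 1) ∈ H) (i : I) (s : Multiplicative S) (c : ℤ) :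
    vec (Pi.single i (algebraMap _ _ (AddMonoidAlgebra.single s.toAdd c))) ∈ H := by
  have hcoord : algebraMap _ (GroupFractionRing S) (AddMonoidAlgebra.single s.toAdd c) =
      c • (groupUnit S s : GroupFractionRing S) := by
    rw [val_groupUnit, ← map_zsmul, AddMonoidAlgebra.smul_single, zsmul_one, Int.cast_id]
  have hvec : Pi.single i (algebraMap _ (GroupFractionRing S)
        (AddMonoidAlgebra.single s.toAdd c)) =
      c • (groupUnit S s : GroupFractionRing S) • Pi.single i 1 := by
    rw [← Pi.single_smul', smul_eq_mul, mul_one, hcoord]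
    exact map_zsmul (AddMonoidHom.single (fun _ => GroupFractionRing S) i) c _
  rw [hvec, vec_zsmul]
  refine zpow_mem ?_ c
  have hconj := mul_mem (mul_mem (hS s) (hI i)) (inv_mem (hS s))
  rwa [inr_mul_vec_mul_inr_inv] at hconj

theorem range_wreathToScaling_le [Finite I] (hS : ∀ s, inr (scalingEmbedding S Q s) ∈ H)
    (hI : ∀ i, vec (Pi.single i 1) ∈ H) (α : A →+ (I → ℤ)) (τ : T →* Multiplicative S) :
    (wreathToScaling Q α τ).range ≤ H := by
  cases nonempty_fintype I
  have hvec (f : T →₀ A) : vec (wreathVec α τ f) ∈ H := by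
    induction f using Finsupp.induction_linear with
    | zero => rw [map_zero, vec_zero]; exact one_mem _
    | add f g hf hg => rw [map_add, vec_add]; exact mul_mem hf hg
    | single t a =>
      rw [← Finset.univ_sum_single (wreathVec α τ (Finsupp.single t a))]
      refine Finset.sum_induction _ (fun v => vec v ∈ H)
        (fun v w hv hw => by rw [vec_add]; exact mul_mem hv hw)
        (by rw [vec_zero]; exact one_mem _) fun i _ => ?_
      rw [wreathVec_apply, wreathCoord_single]
      exact vec_single_mem hS hI i (τ t) _
  rintro _ ⟨x, rfl⟩
  rw [← inl_left_mul_inr_right x, map_mul]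
  exact mul_mem (by simpa [wreathToScaling, vec] using hvec x.left.toAdd)
    (by simpa [wreathToScaling] using hS (τ x.right))

variable {J : Type*} [DecidableEq J] {m : J → ℕ}

theorem inr_scalingEmbedding_mem_range [Finite J]
    (s : Multiplicative (∀ j, ZMod (m j))) :
    (inr (scalingEmbedding _ _ s) : BaumslagModel I m) ∈ (toBaumslagModel m I).range := by
  cases nonempty_fintype J
  choose n hn using fun j => ZMod.intCast_surjective (s.toAdd j)
  refine ⟨powProd (fun y => .of (Sum.inr y)) (Sum.elim n 0), ?_⟩
  have hacting : powProd (actingGen m) (Sum.elim n 0) = scalingEmbedding _ _ s := by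
    refine Prod.ext ?_ ?_
    · rw [fst_powProd_actingGen m fun j => rfl]
      simp [hn, scalingEmbedding]
    · rw [snd_powProd_actingGen]
      simp only [Sum.elim_inl, hn]
      rfl
  rw [map_powProd, ← hacting, map_powProd]
  simp [toBaumslagModel]

omit [DecidableEq I] in
theorem BaumslagGroup.exists_wreathProduct_injective [Fintype J] [Finite I]
    {α : A →+ (I → ℤ)}
    (hα : Injective α) {τ : T →* Multiplicative (∀ j, ZMod (m j))} (hτ : Injective τ) :
    ∃ ι : WreathProduct A T →* BaumslagGroup I m, Injective ι := by
  classical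
  have hrange : (wreathToScaling (Multiplicative (J → ℤ)) α τ).range ≤
      (toBaumslagModel m I).range :=
    range_wreathToScaling_le inr_scalingEmbedding_mem_range
      (fun i => ⟨.of (Sum.inl i), by simp [toBaumslagModel]⟩) α τ
  refine ⟨(equivRange I m).symm.toMonoidHom.comp
    ((wreathToScaling _ α τ).codRestrict _ fun x => hrange ⟨x, rfl⟩), ?_⟩
  exact (equivRange I m).symm.injective.comp
    ((wreathToScaling _ α τ).injective_codRestrict _ _ |>.mpr (wreathToScaling_injective hα hτ))

end WreathEmbedding

section Heisenberg

open scoped MatrixGroups commutatorElement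

open Matrix SemidirectProduct

/-- The integral Heisenberg group in symmetric coordinates: the product adds the determinant of the
vector parts to the central part, so that `SL(2, ℤ)` acts by automorphisms fixing the center. -/
@[ext]
structure Heisenberg where
  center : ℤ
  vector : Fin 2 → ℤ

namespace Heisenberg

/-- The standard symplectic form on `ℤ²`. -/
def symplecticForm (v w : Fin 2 → ℤ) : ℤ := v 0 * w 1 - v 1 * w 0

theorem symplecticForm_mulVec (g : SL(2, ℤ)) (v w : Fin 2 → ℤ) :
    symplecticForm ((g : Matrix _ _ ℤ) *ᵥ v) ((g : Matrix _ _ ℤ) *ᵥ w) = symplecticForm v w := by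
  have hdet := g.det_coe
  rw [det_fin_two] at hdet
  simp only [symplecticForm, mulVec, dotProduct, Fin.sum_univ_two]
  linear_combination (v 0 * w 1 - v 1 * w 0) * hdet

instance : Mul Heisenberg :=
  ⟨fun a b => ⟨a.center + b.center + symplecticForm a.vector b.vector, a.vector + b.vector⟩⟩

instance : One Heisenberg := ⟨⟨0, 0⟩⟩

instance : Inv Heisenberg := ⟨fun a => ⟨-a.center, -a.vector⟩⟩

@[simp]
theorem center_mul (a b : Heisenberg) :
    (a * b).center = a.center + b.center + symplecticForm a.vector b.vector := rfl

@[simp]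
theorem vector_mul (a b : Heisenberg) : (a * b).vector = a.vector + b.vector := rfl

@[simp]
theorem center_one : (1 : Heisenberg).center = 0 := rfl

@[simp]
theorem vector_one : (1 : Heisenberg).vector = 0 := rfl

@[simp]
theorem center_inv (a : Heisenberg) : a⁻¹.center = -a.center := rfl

@[simp]
theorem vector_inv (a : Heisenberg) : a⁻¹.vector = -a.vector := rfl

instance : Group Heisenberg :=
  Group.ofLeftAxioms
    (fun a b c => Heisenberg.ext (by simp [symplecticForm]; ring) (add_assoc _ _ _))
    (fun a => Heisenberg.ext (by simp [symplecticForm]) (zero_add _))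
    (fun a => Heisenberg.ext (by simp [symplecticForm]; ring) (neg_add_cancel _))

theorem commutatorElement_eq (a b : Heisenberg) :
    ⁅a, b⁆ = ⟨2 * symplecticForm a.vector b.vector, 0⟩ := by
  rw [commutatorElement_def]
  ext i
  · simp [symplecticForm]
    ring
  · simp

instance : SMul SL(2, ℤ) Heisenberg :=
  ⟨fun g a => ⟨a.center, (g : Matrix _ _ ℤ) *ᵥ a.vector⟩⟩

@[simp]
theorem center_smul (g : SL(2, ℤ)) (a : Heisenberg) : (g • a).center = a.center := rfl

@[simp]
theorem vector_smul (g : SL(2, ℤ)) (a : Heisenberg) :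
    (g • a).vector = (g : Matrix _ _ ℤ) *ᵥ a.vector := rfl

instance : MulDistribMulAction SL(2, ℤ) Heisenberg where
  one_smul a := Heisenberg.ext rfl (one_mulVec a.vector)
  mul_smul g h a := Heisenberg.ext rfl (mulVec_mulVec a.vector g.1 h.1).symm
  smul_one g := Heisenberg.ext rfl (mulVec_zero g.1)
  smul_mul g a b := Heisenberg.ext
    (by simp only [center_smul, center_mul, vector_smul, symplecticForm_mulVec])
    (mulVec_add g.1 a.vector b.vector)

end Heisenberg

/-- The Heisenberg group extended by `SL(2, ℤ)`. -/
abbrev HeisenbergSL :=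
  SemidirectProduct Heisenberg SL(2, ℤ) (MulDistribMulAction.toMulAut SL(2, ℤ) Heisenberg)

namespace HeisenbergSL

theorem inr_mul_inl_mul_inr_inv (g : SL(2, ℤ)) (a : Heisenberg) :
    (inr g * inl a * (inr g)⁻¹ : HeisenbergSL) = inl (g • a) := by
  rw [← map_inv, ← inl_aut]
  rfl

/-- The inclusion of the center of the Heisenberg group. -/
def centralHom : Multiplicative ℤ →* HeisenbergSL :=
  inl.comp <| MonoidHom.mk' (fun k => (⟨k.toAdd, 0⟩ : Heisenberg)) fun k l =>
    Heisenberg.ext (by simp [Heisenberg.symplecticForm]) (by simp)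

theorem centralHom_injective : Injective centralHom := fun _ _ h =>
  congrArg Heisenberg.center (inl_injective h)

theorem inl_eq_centralHom {a : Heisenberg} (ha : a.vector = 0) :
    inl a = centralHom (.ofAdd a.center) :=
  congrArg inl (Heisenberg.ext rfl ha)

theorem commute_centralHom (k : Multiplicative ℤ) (x : HeisenbergSL) :
    Commute (centralHom k) x := by
  rw [← inl_left_mul_inr_right x]
  refine Commute.mul_right (Commute.map ?_ inl) ?_
  · refine Heisenberg.ext ?_ (add_comm _ _)
    simp [Heisenberg.symplecticForm, add_comm]
  · rw [commute_iff_eq, ← eq_mul_inv_iff_mul_eq]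
    have hfixed : x.right • (⟨k.toAdd, 0⟩ : Heisenberg) = ⟨k.toAdd, 0⟩ :=
      Heisenberg.ext rfl (mulVec_zero x.right.1)
    exact ((inr_mul_inl_mul_inr_inv _ _).trans (congrArg inl hfixed)).symm

end HeisenbergSL

open HeisenbergSL Heisenberg

/-- A relator can hold only up to the center: the commutation of two base elements becomes an
evaluation of the symplectic form. -/
theorem IsBaumslagRelator.exists_eq_centralHom {I J : Type*} [Fintype J] [DecidableEq J]
    {b : Heisenberg} {q : J ⊕ J → SL(2, ℤ)} {m : J → ℕ} (hcomm : ∀ x y, Commute (q x) (q y))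
    (hpow : ∀ j, q (Sum.inl j) ^ m j = 1)
    (hlaurent : ∀ j, (q (Sum.inr j) : Matrix (Fin 2) (Fin 2) ℤ) =
      q (Sum.inl j) + ((q (Sum.inl j))⁻¹ : SL(2, ℤ)) - 3)
    {r : HeisenbergSL} (hr : IsBaumslagRelator (fun _ : I => inl b) (fun y => inr (q y)) m r) :
    ∃ k, r = centralHom k := by
  have hbase (i : I) (e : J ⊕ J → ℤ) :
      baseConj (fun _ => inl b) (fun y => (inr (q y) : HeisenbergSL)) i e =
        inl (powProd q e • b) := by
    rw [baseConj, ← map_powProd, inr_mul_inl_mul_inr_inv]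
  cases hr with
  | commute_acting x y =>
    exact ⟨1, by rw [← map_commutatorElement, (hcomm x y).commutator_eq, map_one, map_one]⟩
  | s_pow j => exact ⟨1, by rw [← map_pow, hpow, map_one, map_one]⟩
  | t_conj i j =>
    rw [hbase, hbase, hbase, laurentProd, ← map_inv, ← map_pow, ← map_mul, ← map_mul, ← map_inv,
      ← map_mul]
    refine ⟨_, inl_eq_centralHom ?_⟩
    simp only [powProd_single, zpow_one, _root_.zpow_neg_one, vector_smul, vector_mul, vector_inv,
      pow_succ, pow_zero, vector_one, hlaurent, sub_mulVec, add_mulVec, ofNat_mulVec]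
    ext k
    simp only [Pi.add_apply, Pi.sub_apply, Pi.neg_apply, Pi.smul_apply, Pi.zero_apply]
    ring
  | commute_base i l e hbox he =>
    rw [hbase, ← map_commutatorElement, commutatorElement_eq]
    exact ⟨_, inl_eq_centralHom rfl⟩

/-- A hyperbolic element of `SL(2, ℤ)`; its trace `4` makes `s + s⁻¹ - 3` invertible over `ℤ`. -/
def hyperbolicElement : SL(2, ℤ) := ⟨!![2, 3; 1, 2], by decide⟩

theorem two_pow_le_hyperbolicElement_pow (n : ℕ) :
    2 ^ n ≤ (hyperbolicElement.1 ^ n) 0 0 ∧ 0 ≤ (hyperbolicElement.1 ^ n) 1 0 ∧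
      2 ^ n ≤ 2 * (hyperbolicElement.1 ^ n) 1 0 + 1 := by
  induction n with
  | zero => simp
  | succ n ih =>
    obtain ⟨hx, hy, -⟩ := ih
    have hpos : (0 : ℤ) < 2 ^ n := by positivity
    have hrow (i : Fin 2) : (hyperbolicElement.1 ^ (n + 1)) i 0 =
        hyperbolicElement.1 i 0 * (hyperbolicElement.1 ^ n) 0 0 +
          hyperbolicElement.1 i 1 * (hyperbolicElement.1 ^ n) 1 0 := by
      rw [pow_succ', mul_apply, Fin.sum_univ_two]
    have hx' : (hyperbolicElement.1 ^ (n + 1)) 0 0 =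
        2 * (hyperbolicElement.1 ^ n) 0 0 + 3 * (hyperbolicElement.1 ^ n) 1 0 := hrow 0
    have hy' : (hyperbolicElement.1 ^ (n + 1)) 1 0 =
        1 * (hyperbolicElement.1 ^ n) 0 0 + 2 * (hyperbolicElement.1 ^ n) 1 0 := hrow 1
    rw [hx', hy', pow_succ]
    refine ⟨?_, ?_, ?_⟩ <;> linarith

end Heisenberg

section LowerBound

open scoped MatrixGroups commutatorElement

open HeisenbergSL Heisenberg SemidirectProduct

theorem AreaLe.exists_natAbs_le {G K : Type*} [Group G] [Group K] {R : Set G} (hfin : R.Finite)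
    (φ : G →* K) {c : Multiplicative ℤ →* K} (hc : ∀ k x, Commute (c k) x)
    (hR : ∀ r ∈ R, ∃ k, φ r = c k) :
    ∃ B : ℕ, ∀ w N, AreaLe R w N → ∃ k, φ w = c k ∧ k.toAdd.natAbs ≤ B * N := by
  choose! f hf using hR
  obtain ⟨B, hB⟩ := (hfin.image fun r => (f r).toAdd.natAbs).bddAbove
  refine ⟨B, fun w N hw => ?_⟩
  obtain ⟨N', hN, k, hk, hle⟩ := hw.exists_le_of_induction
    (P := fun w N => ∃ k, φ w = c k ∧ k.toAdd.natAbs ≤ B * N) ⟨1, by simp, by simp⟩ (by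
      rintro x r w N hr ⟨k, hk, hkle⟩
      obtain ⟨l, hl, hlle⟩ : ∃ l, φ r = c l ∧ l.toAdd.natAbs ≤ B := by
        rcases hr with hr | hr
        · exact ⟨f r, hf r hr, hB ⟨r, hr, rfl⟩⟩
        · refine ⟨(f r⁻¹)⁻¹, by rw [map_inv, ← hf _ hr, map_inv, inv_inv], ?_⟩
          rw [toAdd_inv, Int.natAbs_neg]
          exact hB ⟨r⁻¹, hr, rfl⟩
      refine ⟨l * k, ?_, ?_⟩
      · rw [map_mul, map_mul, map_mul, map_inv, hk, hl, mul_assoc _ (c l), hc l,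
          inv_mul_cancel_left, map_mul]
      · rw [toAdd_mul, mul_add, mul_one, add_comm (B * N)]
        exact (Int.natAbs_add_le _ _).trans (add_le_add hlle hkle))
  exact ⟨k, hk, hle.trans (Nat.mul_le_mul_left _ hN)⟩

variable {I J : Type*} [DecidableEq J]

/-- The action on the Heisenberg group detecting the area: the chosen letter `s` acts by a
hyperbolic matrix, and the letters `t` by the resulting signs `s + s⁻¹ - 3 = ±1`. -/
def heisenbergActing (j₀ : J) : J ⊕ J → SL(2, ℤ)
  | Sum.inl j => if j = j₀ then hyperbolicElement else 1
  | Sum.inr j => if j = j₀ then 1 else -1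

/-- The homomorphism to the extended Heisenberg group under which relators become central. -/
def toHeisenbergSL (I : Type*) (j₀ : J) : FreeGroup (I ⊕ (J ⊕ J)) →* HeisenbergSL :=
  FreeGroup.lift (Sum.elim (fun _ => inl ⟨0, Pi.single 0 1⟩)
    (fun y => inr (heisenbergActing j₀ y)))

variable [Fintype J] {m : J → ℕ}

theorem IsBaumslagRelator.exists_toHeisenbergSL_eq {j₀ : J} (hj₀ : m j₀ = 0)
    {r : FreeGroup (I ⊕ (J ⊕ J))}
    (hr : IsBaumslagRelator (fun i => .of (Sum.inl i)) (fun y => .of (Sum.inr y)) m r) :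
    ∃ k, toHeisenbergSL I j₀ r = centralHom k := by
  refine IsBaumslagRelator.exists_eq_centralHom (I := I) (b := ⟨0, Pi.single 0 1⟩)
    (q := heisenbergActing j₀) (m := m) ?_ (fun j => ?_) (fun j => ?_)
    (by simpa [toHeisenbergSL] using hr.map (toHeisenbergSL I j₀))
  · rintro (j | j) (l | l) <;> simp only [heisenbergActing] <;> split_ifs <;>
      simp
  · by_cases hj : j = j₀ <;> simp [heisenbergActing, hj, hj₀]
  · by_cases hj : j = j₀
    · simp only [heisenbergActing, if_pos hj]
      decide
    · simp only [heisenbergActing, if_neg hj]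
      decide

/-- The commutator of a base letter with its conjugate by the `n`-th power of an acting letter. -/
def commutatorWord (i : I) (j : J) (n : ℕ) : FreeGroup (I ⊕ (J ⊕ J)) :=
  ⁅(FreeGroup.of (Sum.inl i) : FreeGroup (I ⊕ (J ⊕ J))), FreeGroup.of (Sum.inr (Sum.inl j)) ^ n *
    FreeGroup.of (Sum.inl i) * (FreeGroup.of (Sum.inr (Sum.inl j)) ^ n)⁻¹⁆

theorem commutatorWord_mem_normalClosure (i : I) (j : J) (n : ℕ) :
    commutatorWord i j n ∈ Subgroup.normalClosure (baumslagRelators I m) := by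
  classical
  rw [← ker_toBaumslagModel, MonoidHom.mem_ker, commutatorWord, map_commutatorElement,
    commutatorElement_eq_one_iff_commute]
  simp only [toBaumslagModel, map_mul, map_inv, map_pow, FreeGroup.lift_apply_of, Sum.elim_inl,
    Sum.elim_inr]
  rw [← map_pow, inr_mul_vec_mul_inr_inv]
  exact commute_vec _ _

omit [Fintype J] in
theorem toHeisenbergSL_commutatorWord (i : I) (j : J) (n : ℕ) :
    toHeisenbergSL I j (commutatorWord i j n) =
      centralHom (.ofAdd (2 * (hyperbolicElement.1 ^ n) 1 0)) := by
  simp only [commutatorWord, toHeisenbergSL, map_commutatorElement, map_mul, map_inv, map_pow,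
    FreeGroup.lift_apply_of, Sum.elim_inl, Sum.elim_inr]
  rw [← map_pow, inr_mul_inl_mul_inr_inv, ← map_commutatorElement, commutatorElement_eq]
  rw [inl_eq_centralHom rfl]
  simp [symplecticForm, heisenbergActing]

omit [DecidableEq J] [Fintype J] in
theorem freeNorm_commutatorWord_le (i : I) (j : J) (n : ℕ) :
    freeNorm (commutatorWord i j n) ≤ 4 * n + 4 := by
  classical
  have hcommutator (x y : FreeGroup (I ⊕ (J ⊕ J))) :
      FreeGroup.norm ⁅x, y⁆ ≤ 2 * (x.norm + y.norm) := by
    have h := (x * y * x⁻¹).norm_mul_le y⁻¹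
    have h' := (x * y).norm_mul_le x⁻¹
    rw [FreeGroup.norm_inv_eq] at h h'
    rw [commutatorElement_def]
    linarith [x.norm_mul_le y]
  have hconj (x y : FreeGroup (I ⊕ (J ⊕ J))) :
      FreeGroup.norm (x * y * x⁻¹) ≤ 2 * x.norm + y.norm := by
    have h := (x * y).norm_mul_le x⁻¹
    rw [FreeGroup.norm_inv_eq] at h
    linarith [x.norm_mul_le y]
  rw [freeNorm_eq_length_toWord]
  change FreeGroup.norm _ ≤ _
  refine (hcommutator _ _).trans ?_
  have h := hconj (.of (Sum.inr (Sum.inl j)) ^ n) (.of (Sum.inl i))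
  rw [FreeGroup.norm_of_pow, FreeGroup.norm_of] at h
  rw [FreeGroup.norm_of]
  omega

theorem dominates_dehnFunction_baumslagRelators [Finite I] [Nonempty I] {j₀ : J} (hj₀ : m j₀ = 0)
    {δ : ℕ → ℕ} (hδ : IsDehnFunctionOf (baumslagRelators I m) δ) :
    Dominates (fun n => 2 ^ n) δ := by
  obtain ⟨i⟩ := ‹Nonempty I›
  obtain ⟨B, hB⟩ := AreaLe.exists_natAbs_le (finite_setOf_isBaumslagRelator _ _ _)
    (toHeisenbergSL I j₀) commute_centralHom fun _ hr => hr.exists_toHeisenbergSL_eq hj₀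
  refine ⟨B + 8, by omega, fun n => ?_⟩
  rcases Nat.eq_zero_or_pos n with rfl | hn
  · simp only [pow_zero]
    omega
  have harea : AreaLe (baumslagRelators I m) (commutatorWord i j₀ n) (δ ((B + 8) * n)) :=
    (hδ ((B + 8) * n)).1 _ (commutatorWord_mem_normalClosure i j₀ n)
      ((freeNorm_commutatorWord_le i j₀ n).trans (by nlinarith))
  obtain ⟨k, hk, hkle⟩ := hB _ _ harea
  rw [toHeisenbergSL_commutatorWord] at hk
  rw [← centralHom_injective hk, toAdd_ofAdd] at hkle
  obtain ⟨-, hy, hgrowth⟩ := two_pow_le_hyperbolicElement_pow n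
  have hpow : 2 ^ n ≤ B * δ ((B + 8) * n) + 1 := by
    zify
    zify at hkle
    rw [abs_of_nonneg (by linarith)] at hkle
    linarith
  have hB' : B * δ ((B + 8) * n) ≤ (B + 8) * δ ((B + 8) * n) := by gcongr; omega
  dsimp only
  omega

end LowerBound

section MagnusEmbedding

open scoped commutatorElement

open Abelianization

theorem wreathShift_mul {A T : Type*} [AddCommGroup A] [CommGroup T] (s t : T) (f : T →₀ A) :
    wreathShift (s * t) f = wreathShift s (wreathShift t f) :=
  congrArg Multiplicative.toAdd
    (DFunLike.congr_fun (map_mul (wreathAction A T) s t) (Multiplicative.ofAdd f))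

variable {X : Type*}

/-- The Magnus representation of a free group, sending a generator `i` to its basis vector at the
identity followed by its class in the abelianization. -/
noncomputable def magnusHom (X : Type*) :
    FreeGroup X →* WreathProduct (X →₀ ℤ) (Abelianization (FreeGroup X)) :=
  FreeGroup.lift fun i =>
    ⟨Multiplicative.ofAdd (Finsupp.single 1 (Finsupp.single i 1)), of (FreeGroup.of i)⟩

theorem right_magnusHom (w : FreeGroup X) : (magnusHom X w).right = of w := by
  have hcomp : SemidirectProduct.rightHom.comp (magnusHom X) = of := by
    ext i
    simp [magnusHom]
  exact DFunLike.congr_fun hcomp w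

/-- The flow of a word: the net number of times that its path in the Cayley graph of the
abelianization crosses each edge, indexed by the origin and the label of the edge. -/
noncomputable def flow (w : FreeGroup X) : Abelianization (FreeGroup X) →₀ (X →₀ ℤ) :=
  (magnusHom X w).left.toAdd

theorem flow_one : flow (1 : FreeGroup X) = 0 := by
  rw [flow, map_one]
  rfl

theorem flow_of (i : X) : flow (FreeGroup.of i) = Finsupp.single 1 (Finsupp.single i 1) := by
  rw [flow, magnusHom, FreeGroup.lift_apply_of]
  rfl

theorem flow_mul (w v : FreeGroup X) : flow (w * v) = flow w + wreathShift (of w) (flow v) := by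
  rw [flow, map_mul, SemidirectProduct.mul_left, right_magnusHom]
  rfl

/-- A chosen word representing each element of the abelianized free group. -/
noncomputable def abelianWord : Abelianization (FreeGroup X) → FreeGroup X :=
  surjInv QuotientGroup.mk_surjective

theorem of_abelianWord (q : Abelianization (FreeGroup X)) : of (abelianWord q) = q :=
  surjInv_eq _ q

/-- The element of the derived subgroup obtained by reading `w` from the chosen representative of
`q` to the chosen representative of its endpoint, as in Schreier's rewriting process. -/
noncomputable def schreierElement (q : Abelianization (FreeGroup X)) (w : FreeGroup X) :
    commutator (FreeGroup X) :=
  ⟨abelianWord q * w * (abelianWord (q * of w))⁻¹, by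
    rw [← QuotientGroup.eq_one_iff]
    change of _ = 1
    rw [map_mul, map_mul, map_inv, of_abelianWord, of_abelianWord, mul_inv_cancel]⟩

/-- The class of a Schreier element in the abelianization of the derived subgroup. -/
noncomputable def schreierClass (q : Abelianization (FreeGroup X)) (w : FreeGroup X) :
    Additive (Abelianization (commutator (FreeGroup X))) :=
  Additive.ofMul (of (schreierElement q w))

theorem schreierClass_mul (q : Abelianization (FreeGroup X)) (w v : FreeGroup X) :
    schreierClass q (w * v) = schreierClass q w + schreierClass (q * of w) v := by
  rw [schreierClass, schreierClass, schreierClass, ← ofMul_mul, ← map_mul]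
  congr 2
  apply Subtype.ext
  simp [schreierElement, mul_assoc]

theorem schreierClass_one (q : Abelianization (FreeGroup X)) : schreierClass q 1 = 0 := by
  simpa using schreierClass_mul q 1 1

/-- The homomorphism sending a flow to the sum of the Schreier classes of its edges. -/
noncomputable def flowClass (X : Type*) : (Abelianization (FreeGroup X) →₀ (X →₀ ℤ)) →+
    Additive (Abelianization (commutator (FreeGroup X))) :=
  Finsupp.liftAddHom fun q =>
    Finsupp.liftAddHom fun i => zmultiplesHom _ (schreierClass q (FreeGroup.of i))

theorem flowClass_wreathShift_flow (q : Abelianization (FreeGroup X)) (w : FreeGroup X) :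
    flowClass X (wreathShift q (flow w)) = schreierClass q w := by
  have hone (q : Abelianization (FreeGroup X)) :
      flowClass X (wreathShift q (flow 1)) = schreierClass q 1 := by
    rw [flow_one, map_zero, map_zero, schreierClass_one]
  have hmul (q : Abelianization (FreeGroup X)) (w v : FreeGroup X) :
      flowClass X (wreathShift q (flow (w * v))) =
        flowClass X (wreathShift q (flow w)) + flowClass X (wreathShift (q * of w) (flow v)) := by
    rw [flow_mul, map_add, map_add, wreathShift_mul]
  have hof (q : Abelianization (FreeGroup X)) (i : X) :
      flowClass X (wreathShift q (flow (.of i))) = schreierClass q (.of i) := by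
    have hshift : wreathShift q (flow (FreeGroup.of i)) = .single q (.single i 1) := by
      simp [flow_of, wreathShift]
    rw [hshift, flowClass, Finsupp.liftAddHom_apply_single, Finsupp.liftAddHom_apply_single,
      zmultiplesHom_apply, one_zsmul]
  induction w using FreeGroup.induction_on generalizing q with
  | C1 => exact hone q
  | of i => exact hof q i
  | inv_of i _ =>
    have h := hmul q (FreeGroup.of i)⁻¹ (.of i)
    rw [inv_mul_cancel, hone, hof, ← inv_mul_cancel (FreeGroup.of i), schreierClass_mul] at h
    exact (add_right_cancel h).symm
  | mul w v hw hv => rw [hmul, hw, hv, schreierClass_mul]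

theorem map_subtype_commutator (G : Type*) [Group G] :
    (commutator (commutator G)).map (commutator G).subtype = derivedSeries G 2 := by
  rw [commutator_def (commutator G), Subgroup.map_commutator, ← MonoidHom.range_eq_map,
    Subgroup.range_subtype, derivedSeries_succ, derivedSeries_one]

theorem ker_magnusHom : (magnusHom X).ker = derivedSeries (FreeGroup X) 2 := by
  refine le_antisymm (fun w hw => ?_)
    ((isMetabelian_semidirectProduct _).derivedSeries_two_le_ker _)
  rw [MonoidHom.mem_ker] at hw
  have habel : of w = 1 := by rw [← right_magnusHom, hw, SemidirectProduct.one_right]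
  have hflow : flow w = 0 := by
    rw [flow, hw]
    rfl
  have hclass : of (schreierElement 1 w) = 1 := by
    have h := flowClass_wreathShift_flow 1 w
    rw [hflow, map_zero, map_zero] at h
    exact Additive.ofMul.injective h.symm
  have hmem : abelianWord 1 * w * (abelianWord 1)⁻¹ ∈ derivedSeries (FreeGroup X) 2 := by
    rw [← map_subtype_commutator]
    refine ⟨schreierElement 1 w, (QuotientGroup.eq_one_iff _).1 hclass, ?_⟩
    simp [schreierElement, habel]
  rwa [(derivedSeries_normal _ 2).mem_comm_iff, inv_mul_cancel_left] at hmem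

theorem FreeMetabelian.exists_wreathProduct_injective (X : Type*) :
    ∃ f : FreeMetabelian X →* WreathProduct (X →₀ ℤ) (Abelianization (FreeGroup X)),
      Injective f :=
  ⟨QuotientGroup.lift _ (magnusHom X) ker_magnusHom.ge,
    (QuotientGroup.injective_lift_iff _ _ _).2 ker_magnusHom.symm⟩

end MagnusEmbedding

section Embedding

/-- The group `G` embeds into a finitely presented metabelian group whose Dehn function is
equivalent to `2 ^ n`. -/
def EmbedsInExponentialDehn (G : Type*) [Group G] : Prop :=
  ∃ (X : Type) (_ : Finite X) (S : Set (FreeGroup X)) (δ : ℕ → ℕ),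
    S.Finite ∧
    IsMetabelian (FreeGroup X ⧸ Subgroup.normalClosure S) ∧
    IsDehnFunctionOf S δ ∧ DehnEquiv δ (fun n => 2 ^ n) ∧
    ∃ ι : G →* FreeGroup X ⧸ Subgroup.normalClosure S, Injective ι

theorem EmbedsInExponentialDehn.of_injective {G K : Type*} [Group G] [Group K]
    (hK : EmbedsInExponentialDehn K) {f : G →* K} (hf : Injective f) :
    EmbedsInExponentialDehn G := by
  obtain ⟨X, hX, S, δ, hS, hmet, hδ, hequiv, ι, hι⟩ := hK
  exact ⟨X, hX, S, δ, hS, hmet, hδ, hequiv, ι.comp f, hι.comp hf⟩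

theorem exists_injective_multiplicative_pi_zmod (T : Type*) [CommGroup T] [Group.FG T] :
    ∃ (J : Type) (_ : Fintype J) (m : J → ℕ) (τ : T →* Multiplicative (∀ j, ZMod (m j))),
      (∃ j, m j = 0) ∧ Injective τ := by
  obtain ⟨P, K, _, _, p, _, e, ⟨φ⟩⟩ := CommGroup.equiv_free_prod_prod_multiplicative_zmod T
  -- The index `none` guarantees an infinite factor even when `T` is finite.
  let m : Option (K ⊕ P) → ℕ
    | none => 0
    | some (Sum.inl _) => 0
    | some (Sum.inr i) => p i ^ e i
  let τ : T →* Multiplicative (∀ j, ZMod (m j)) := AddMonoidHom.toMultiplicativeRight <|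
    AddMonoidHom.pi fun
    | none => 0
    | some (Sum.inl k) => MonoidHom.toAdditiveLeft <|
        (Pi.evalMonoidHom _ k).comp ((MonoidHom.fst _ _).comp φ.toMonoidHom)
    | some (Sum.inr i) => MonoidHom.toAdditiveLeft <|
        (Pi.evalMonoidHom _ i).comp ((MonoidHom.snd _ _).comp φ.toMonoidHom)
  refine ⟨Option (K ⊕ P), inferInstance, m, τ, ⟨none, rfl⟩, fun s t h => φ.injective ?_⟩
  exact Prod.ext (funext fun k => congrFun h (some (Sum.inl k)))
    (funext fun i => congrFun h (some (Sum.inr i)))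

theorem embedsInExponentialDehn_wreathProduct {A T : Type*} {I : Type} [AddCommGroup A]
    [CommGroup T] [Group.FG T] [Finite I] {α : A →+ (I → ℤ)} (hα : Injective α) :
    EmbedsInExponentialDehn (WreathProduct A T) := by
  classical
  obtain ⟨J, _, m, τ, ⟨j, hj⟩, hτ⟩ := exists_injective_multiplicative_pi_zmod T
  cases nonempty_fintype I
  -- The index `none` guarantees a base letter even when `A` is trivial.
  let α' : A →+ (Option I → ℤ) :=
    AddMonoidHom.pi fun i => i.elim 0 fun i => (Pi.evalAddMonoidHom _ i).comp α
  have hα' : Injective α' := fun a b h => hα (funext fun i => congrFun h (some i))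
  obtain ⟨δ, hδ, hupper⟩ := exists_isDehnFunctionOf_baumslagRelators (I := Option I) (m := m)
  exact ⟨Option I ⊕ (J ⊕ J), inferInstance, baumslagRelators (Option I) m, δ,
    finite_setOf_isBaumslagRelator _ _ _, BaumslagGroup.isMetabelian, hδ,
    ⟨hupper, dominates_dehnFunction_baumslagRelators hj hδ⟩,
    BaumslagGroup.exists_wreathProduct_injective hα' hτ⟩

theorem embedsInExponentialDehn_freeMetabelian (X : Type) [Finite X] :
    EmbedsInExponentialDehn (FreeMetabelian X) := by
  obtain ⟨f, hf⟩ := FreeMetabelian.exists_wreathProduct_injective X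
  have : Group.FG (Abelianization (FreeGroup X)) := QuotientGroup.fg _
  have hwreath : EmbedsInExponentialDehn
      (WreathProduct (X →₀ ℤ) (Abelianization (FreeGroup X))) :=
    embedsInExponentialDehn_wreathProduct (α := (Finsupp.coeFnAddHom : (X →₀ ℤ) →+ (X → ℤ)))
      DFunLike.coe_injective
  exact hwreath.of_injective hf

end Embedding

/-- Every wreath product of a free abelian group of finite rank with a
finitely generated abelian group embeds into a finitely presented metabelian group with
Dehn function equivalent to `2ⁿ`; in particular so does every free metabelian group of
finite rank. -/
theorem wreath_embeds_exponential_dehn :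
    (∀ (A T : Type) (_ : AddCommGroup A) (_ : CommGroup T) (r : ℕ),
      Nonempty (A ≃+ (Fin r → ℤ)) → Group.FG T →
      ∃ (X : Type) (_ : Finite X) (S : Set (FreeGroup X)) (δ : ℕ → ℕ),
        S.Finite ∧
        IsMetabelian (FreeGroup X ⧸ Subgroup.normalClosure S) ∧
        IsDehnFunctionOf S δ ∧ DehnEquiv δ (fun n => 2 ^ n) ∧
        ∃ ι : WreathProduct A T →* FreeGroup X ⧸ Subgroup.normalClosure S,
          Function.Injective ι) ∧
    (∀ r : ℕ,
      ∃ (X : Type) (_ : Finite X) (S : Set (FreeGroup X)) (δ : ℕ → ℕ),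
        S.Finite ∧
        IsMetabelian (FreeGroup X ⧸ Subgroup.normalClosure S) ∧
        IsDehnFunctionOf S δ ∧ DehnEquiv δ (fun n => 2 ^ n) ∧
        ∃ ι : FreeMetabelian (Fin r) →* FreeGroup X ⧸ Subgroup.normalClosure S,
          Function.Injective ι) := by
  refine ⟨fun A T _ _ r ⟨e⟩ _ => ?_, fun r => embedsInExponentialDehn_freeMetabelian (Fin r)⟩
  exact embedsInExponentialDehn_wreathProduct (α := e.toAddMonoidHom) e.injective
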